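/- arXiv:2106.03227 — 2 statements merged into one kernel-verified Lean document; each statement's English description precedes it below -/
import Mathlib

section
/- (Theorem 3.2, Type-I error part, test-only bootstrap.) Assume the null hypothesis p = q. Let α_level, γ ∈ (0,1), define λ_{(2),1} = √(4 log(4/α_level)), λ_{(1)} = √(4 log(8/γ)), and the threshold t_thres = 4 (√(1.1) λ_{(2),1} + λ_{(1)}) √(ν/(c_a n)). If n > (λ_{(1)}/(0.1 ν))²/(8 c_a) and n > max{λ_{(1)}, λ_{(2),1}}²/(9 ν c_a), then there exists a measurable set E of training configurations D_tr with P_(1)(E) ≥ 1 − γ such that for every D_tr ∈ E, the conditional probability P_(2)[ T̂_a > t_thres ] ≤ α_level. -/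
open MeasureTheory Real
open scoped BigOperators ENNReal

/-- The asymmetric empirical MMD statistic `T̂_a` of kernel `K`, computed between the
training sample `dtr = (X₍₁₎, Y₍₁₎)` and the test sample `dte = (X₍₂₎, Y₍₂₎)`. -/
noncomputable def asymMMD {𝒳 : Type*} (K : 𝒳 → 𝒳 → ℝ) (n1X n1Y n2X n2Y : ℕ)
    (dtr : (Fin n1X → 𝒳) × (Fin n1Y → 𝒳))
    (dte : (Fin n2X → 𝒳) × (Fin n2Y → 𝒳)) : ℝ :=
  (1/((n2X:ℝ)*(n1X:ℝ))) * ∑ i, ∑ j, K (dte.1 i) (dtr.1 j)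
  - (1/((n2X:ℝ)*(n1Y:ℝ))) * ∑ i, ∑ j, K (dte.1 i) (dtr.2 j)
  - (1/((n2Y:ℝ)*(n1X:ℝ))) * ∑ i, ∑ j, K (dte.2 i) (dtr.1 j)
  + (1/((n2Y:ℝ)*(n1Y:ℝ))) * ∑ i, ∑ j, K (dte.2 i) (dtr.2 j)

/-!
Under the null hypothesis the statistic is an average, over one point from each of the four
samples, of the kernel `K x' x - K x' y - K y' x + K y' y`, which is centred, bounded by `4` and of
second moment at most `4 ν`. Following Hoeffding, let `N` be the smallest sample size. Cyclic
shifts of the indices write the average as a mean of averages over `N` independent quadruples, so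
convexity of the exponential and the Bernstein-type inequality `exp x ≤ 1 + x + x ^ 2` on
`|x| ≤ 1` bound the moment generating function at `N θ` by `exp (4 N ν θ ^ 2)` for
`|θ| ≤ 1 / 4`. The lower bound on the total sample size places a suitable `θ` in this range, and
Chernoff's inequality shows that the statistic exceeds the threshold with probability at most `α γ`
under the joint law of training and test data. By Markov's inequality, the training data
conditionally on which that probability exceeds `α` have probability at most `γ`.
-/

open ProbabilityTheory

section Expect

variable {ι κ Ω A : Type*} [Fintype ι] [Fintype κ]

lemma map_expect_le_of_convexOn [Nonempty ι] {s : Set ℝ} {f : ℝ → ℝ} (hf : ConvexOn ℝ s f)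
    {x : ι → ℝ} (hx : ∀ i, x i ∈ s) : f (𝔼 i, x i) ≤ 𝔼 i, f (x i) := by
  have hjensen := hf.map_sum_le (t := Finset.univ) (w := fun _ ↦ (Fintype.card ι : ℝ)⁻¹) (p := x)
    (fun _ _ ↦ by positivity) (by simp) (fun i _ ↦ hx i)
  simpa only [smul_eq_mul, ← Finset.mul_sum, Fintype.expect_eq_sum_div_card, div_eq_inv_mul]
    using hjensen

variable [MeasurableSpace Ω] [MeasurableSpace A]

lemma mgf_expect_le [Nonempty ι] {P : Measure Ω} {S : ι → Ω → ℝ} {t M : ℝ}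
    (h_int : ∀ i, Integrable (fun ω ↦ exp (t * S i ω)) P) (hM : ∀ i, mgf (S i) P t ≤ M) :
    mgf (fun ω ↦ 𝔼 i, S i ω) P t ≤ M := by
  have hjensen (ω : Ω) : exp (t * 𝔼 i, S i ω) ≤ 𝔼 i, exp (t * S i ω) := by
    rw [Finset.mul_expect]
    exact map_expect_le_of_convexOn convexOn_exp fun _ ↦ Set.mem_univ _
  have hint_expect : Integrable (fun ω ↦ 𝔼 i, exp (t * S i ω)) P := by
    simp only [Fintype.expect_eq_sum_div_card]
    exact (integrable_finsetSum _ fun i _ ↦ h_int i).div_const _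
  calc mgf (fun ω ↦ 𝔼 i, S i ω) P t ≤ ∫ ω, 𝔼 i, exp (t * S i ω) ∂P :=
        integral_mono_of_nonneg (.of_forall fun _ ↦ (exp_pos _).le) hint_expect
          (.of_forall hjensen)
    _ = 𝔼 i, mgf (S i) P t := by
        simp only [Fintype.expect_eq_sum_div_card, integral_div, mgf]
        rw [integral_finsetSum _ fun i _ ↦ h_int i]
    _ ≤ M := Finset.expect_le Finset.univ_nonempty fun i _ ↦ hM i

lemma exp_card_mul_expect (t : ℝ) (y : κ → ℝ) :
    exp (Fintype.card κ * t * 𝔼 k, y k) = ∏ k, exp (t * y k) := by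
  rw [← exp_sum, ← Finset.mul_sum, ← Fintype.card_mul_expect, mul_left_comm, mul_assoc]

lemma mgf_expect_pi (μ : Measure A) [SigmaFinite μ] (h : A → ℝ) (t : ℝ) :
    mgf (fun x : κ → A ↦ 𝔼 k, h (x k)) (Measure.pi fun _ ↦ μ) (Fintype.card κ * t) =
      mgf h μ t ^ Fintype.card κ := by
  simp only [mgf, exp_card_mul_expect]
  exact integral_fintype_prod_eq_pow fun a ↦ exp (t * h a)

lemma integrable_exp_mul_expect_pi {μ : Measure A} [SigmaFinite μ] {h : A → ℝ} {t : ℝ}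
    (h_int : Integrable (fun a ↦ exp (t * h a)) μ) :
    Integrable (fun x : κ → A ↦ exp (Fintype.card κ * t * 𝔼 k, h (x k)))
      (Measure.pi fun _ ↦ μ) := by
  simp only [exp_card_mul_expect]
  exact .fintype_prod fun _ ↦ h_int

end Expect

section Blocks

variable {I J Ω Ω' A B : Type*} [MeasurableSpace Ω] [MeasurableSpace Ω'] [MeasurableSpace A]
  [MeasurableSpace B]

/-- Hoeffding's block device for `U`-statistics. The units `u i : Ω → A` can be listed, starting
from any `i`, in a block of `N` units which is an i.i.d. sample of `μ` under `P`; the `k`-th entry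
of the block is a permutation `e k` of the starting point, so that averaging over the starting
point makes every entry run through all the units once. -/
def HasIIDBlocks (N : ℕ) (u : I → Ω → A) (P : Measure Ω) (μ : Measure A) : Prop :=
  ∃ e : Fin N → Equiv.Perm I, ∀ i,
    MeasurePreserving (fun ω k ↦ u (e k i) ω) P (Measure.pi fun _ ↦ μ)

lemma measurePreserving_precomp {ι κ : Type*} [Fintype ι] [Fintype κ] (μ : Measure A)
    [IsProbabilityMeasure μ] {f : κ → ι} (hf : f.Injective) :
    MeasurePreserving (fun (x : ι → A) k ↦ x (f k))
      (Measure.pi fun _ ↦ μ) (Measure.pi fun _ ↦ μ) := by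
  refine ⟨by fun_prop, ?_⟩
  have hindep : iIndepFun (fun k (x : ι → A) ↦ x (f k)) (Measure.pi fun _ : ι ↦ μ) :=
    (iIndepFun_pi (X := fun _ a ↦ a) fun _ ↦ aemeasurable_id).precomp hf
  rw [hindep.map_fun_eq_pi_map fun k ↦ (measurable_pi_apply (f k)).aemeasurable]
  simp only [(measurePreserving_eval (fun _ : ι ↦ μ) _).map_eq]

lemma hasIIDBlocks_eval {N n : ℕ} (hN : N ≤ n) (μ : Measure A) [IsProbabilityMeasure μ] :
    HasIIDBlocks N (fun i (x : Fin n → A) ↦ x i) (Measure.pi fun _ ↦ μ) μ := by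
  cases n with
  | zero => exact ⟨fun _ ↦ 1, finZeroElim⟩
  | succ n =>
    refine ⟨fun k ↦ Equiv.addLeft (k.castLE hN), fun i ↦ measurePreserving_precomp μ ?_⟩
    exact (add_left_injective i).comp (Fin.castLE_injective hN)

namespace HasIIDBlocks

variable {N : ℕ} {u : I → Ω → A} {v : J → Ω' → B} {P : Measure Ω} {Q : Measure Ω'} {μ : Measure A}
  {ν : Measure B}

lemma prodMap [SFinite P] [SFinite Q] [SigmaFinite μ] [SigmaFinite ν]
    (hu : HasIIDBlocks N u P μ) (hv : HasIIDBlocks N v Q ν) :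
    HasIIDBlocks N (fun s : I × J ↦ Prod.map (u s.1) (v s.2)) (P.prod Q) (μ.prod ν) := by
  obtain ⟨e, he⟩ := hu
  obtain ⟨f, hf⟩ := hv
  exact ⟨fun k ↦ (e k).prodCongr (f k), fun s ↦
    (measurePreserving_arrowProdEquivProdArrow A B (Fin N) (fun _ ↦ μ) fun _ ↦ ν).symm.comp
      ((he s.1).prod (hf s.2))⟩

lemma measurePreserving [NeZero N] [IsProbabilityMeasure μ] (hu : HasIIDBlocks N u P μ) (i : I) :
    MeasurePreserving (u i) P μ := by
  obtain ⟨e, he⟩ := hu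
  simpa only [Function.comp_def, Function.eval, Equiv.apply_symm_apply] using
    (measurePreserving_eval (fun _ : Fin N ↦ μ) 0).comp (he ((e 0).symm i))

variable [Fintype I] [Nonempty I]

lemma mgf_expect_le [NeZero N] [SigmaFinite μ] (hu : HasIIDBlocks N u P μ) {h : A → ℝ} {t : ℝ}
    (h_int : Integrable (fun a ↦ exp (t * h a)) μ) :
    mgf (fun ω ↦ 𝔼 i, h (u i ω)) P (N * t) ≤ mgf h μ t ^ N := by
  obtain ⟨e, he⟩ := hu
  have hperm (ω : Ω) : 𝔼 i, h (u i ω) = 𝔼 i, 𝔼 k, h (u (e k i) ω) := by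
    rw [Finset.expect_comm]
    have hk (k : Fin N) : 𝔼 i, h (u (e k i) ω) = 𝔼 i, h (u i ω) :=
      Fintype.expect_equiv (e k) _ _ fun _ ↦ rfl
    simp only [hk, Fintype.expect_const]
  have hint_pi := integrable_exp_mul_expect_pi (κ := Fin N) h_int
  have hmgf_pi := mgf_expect_pi (κ := Fin N) μ h t
  rw [Fintype.card_fin] at hint_pi hmgf_pi
  simp only [hperm]
  refine _root_.mgf_expect_le (fun i ↦ (he i).integrable_comp_of_integrable hint_pi) fun i ↦ ?_
  rw [← hmgf_pi, ← (he i).map_eq, mgf_map (he i).aemeasurable]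
  · rfl
  · rw [(he i).map_eq]
    exact hint_pi.aestronglyMeasurable

end HasIIDBlocks

end Blocks

section Bernstein

variable {Ω : Type*} [MeasurableSpace Ω]

lemma mgf_le_exp_sq_mul_integral_sq {P : Measure Ω} [IsProbabilityMeasure P] {Z : Ω → ℝ} {b t : ℝ}
    (hZ : AEStronglyMeasurable Z P) (hb : ∀ ω, |Z ω| ≤ b) (hmean : ∫ ω, Z ω ∂P = 0)
    (ht : |t| * b ≤ 1) :
    mgf Z P t ≤ exp (t ^ 2 * ∫ ω, Z ω ^ 2 ∂P) := by
  have hLp : MemLp Z 2 P := .of_bound hZ b (.of_forall hb)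
  have h_int : Integrable Z P := hLp.integrable one_le_two
  have hlin : Integrable (fun ω ↦ 1 + t * Z ω) P := (integrable_const 1).add (h_int.const_mul t)
  have hsq : Integrable (fun ω ↦ t ^ 2 * Z ω ^ 2) P := hLp.integrable_sq.const_mul _
  have hexp (ω : Ω) : exp (t * Z ω) ≤ 1 + t * Z ω + t ^ 2 * Z ω ^ 2 := by
    have hsmall : |t * Z ω| ≤ 1 := by
      rw [abs_mul]
      exact (mul_le_mul_of_nonneg_left (hb ω) (abs_nonneg t)).trans ht
    linarith [(abs_le.1 (abs_exp_sub_one_sub_id_le hsmall)).2, mul_pow t (Z ω) 2]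
  calc mgf Z P t ≤ ∫ ω, (1 + t * Z ω + t ^ 2 * Z ω ^ 2) ∂P :=
        integral_mono_of_nonneg (.of_forall fun _ ↦ (exp_pos _).le) (hlin.add hsq)
          (.of_forall hexp)
    _ = t ^ 2 * ∫ ω, Z ω ^ 2 ∂P + 1 := by
        rw [integral_add hlin hsq, integral_add (integrable_const 1) (h_int.const_mul t),
          integral_const_mul, integral_const_mul, hmean]
        simp [add_comm]
    _ ≤ exp (t ^ 2 * ∫ ω, Z ω ^ 2 ∂P) := add_one_le_exp _

end Bernstein

section FiberDiff

variable {X Y : Type*}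

/-- The difference operator in the second variable of a function of two variables, used in each
variable of a kernel in turn. Its values are centred when the two points are drawn from the same
law. -/
def fiberDiff (g : Y × X → ℝ) (z : Y × (X × X)) : ℝ :=
  g (z.1, z.2.1) - g (z.1, z.2.2)

lemma abs_fiberDiff_le {g : Y × X → ℝ} {b : ℝ} (hb : ∀ w, |g w| ≤ b) (z : Y × (X × X)) :
    |fiberDiff g z| ≤ 2 * b := by
  rw [two_mul]
  exact (abs_sub _ _).trans (add_le_add (hb _) (hb _))

variable [MeasurableSpace X] [MeasurableSpace Y]

lemma measurable_fiberDiff {g : Y × X → ℝ} (hg : Measurable g) :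
    Measurable (fiberDiff g) := by
  unfold fiberDiff
  fun_prop

lemma integral_comp_of_measurePreserving {μ : Measure X} {ρ : Measure Y} {f : X → Y} {g : Y → ℝ}
    (hf : MeasurePreserving f μ ρ) (hg : AEStronglyMeasurable g ρ) :
    ∫ x, g (f x) ∂μ = ∫ y, g y ∂ρ := by
  rw [← hf.map_eq] at hg ⊢
  exact (integral_map hf.aemeasurable hg).symm

variable {ρ : Measure Y} {p : Measure X} [SFinite ρ] [IsProbabilityMeasure p] {g : Y × X → ℝ}

lemma measurePreserving_prodMap_id_fst :
    MeasurePreserving (fun z : Y × (X × X) ↦ (z.1, z.2.1)) (ρ.prod (p.prod p)) (ρ.prod p) :=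
  (MeasurePreserving.id ρ).prod measurePreserving_fst

lemma measurePreserving_prodMap_id_snd :
    MeasurePreserving (fun z : Y × (X × X) ↦ (z.1, z.2.2)) (ρ.prod (p.prod p)) (ρ.prod p) :=
  (MeasurePreserving.id ρ).prod measurePreserving_snd

lemma integral_fiberDiff (hg : Integrable g (ρ.prod p)) :
    ∫ z, fiberDiff g z ∂(ρ.prod (p.prod p)) = 0 := by
  have hfst : Integrable (fun z : Y × (X × X) ↦ g (z.1, z.2.1)) (ρ.prod (p.prod p)) :=
    measurePreserving_prodMap_id_fst.integrable_comp_of_integrable hg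
  have hsnd : Integrable (fun z : Y × (X × X) ↦ g (z.1, z.2.2)) (ρ.prod (p.prod p)) :=
    measurePreserving_prodMap_id_snd.integrable_comp_of_integrable hg
  unfold fiberDiff
  rw [integral_sub hfst hsnd,
    integral_comp_of_measurePreserving measurePreserving_prodMap_id_fst hg.aestronglyMeasurable,
    integral_comp_of_measurePreserving measurePreserving_prodMap_id_snd hg.aestronglyMeasurable,
    sub_self]

lemma memLp_fiberDiff {r : ℝ≥0∞} (hg : MemLp g r (ρ.prod p)) :
    MemLp (fiberDiff g) r (ρ.prod (p.prod p)) :=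
  (hg.comp_measurePreserving measurePreserving_prodMap_id_fst).sub
    (hg.comp_measurePreserving measurePreserving_prodMap_id_snd)

lemma integral_fiber_mul_fiber_nonneg
    (h_int : Integrable (fun z : Y × (X × X) ↦ g (z.1, z.2.1) * g (z.1, z.2.2))
      (ρ.prod (p.prod p))) :
    0 ≤ ∫ z, g (z.1, z.2.1) * g (z.1, z.2.2) ∂(ρ.prod (p.prod p)) := by
  rw [integral_prod _ h_int]
  refine integral_nonneg fun y ↦ ?_
  simp only [Pi.zero_apply]
  rw [integral_prod_mul (fun x ↦ g (y, x)) fun x ↦ g (y, x)]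
  exact mul_self_nonneg _

lemma integral_fiberDiff_sq_le (hg : MemLp g 2 (ρ.prod p)) :
    ∫ z, fiberDiff g z ^ 2 ∂(ρ.prod (p.prod p)) ≤ 2 * ∫ w, g w ^ 2 ∂(ρ.prod p) := by
  have hfst : MemLp (fun z : Y × (X × X) ↦ g (z.1, z.2.1)) 2 (ρ.prod (p.prod p)) :=
    hg.comp_measurePreserving measurePreserving_prodMap_id_fst
  have hsnd : MemLp (fun z : Y × (X × X) ↦ g (z.1, z.2.2)) 2 (ρ.prod (p.prod p)) :=
    hg.comp_measurePreserving measurePreserving_prodMap_id_snd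
  have hmul : Integrable (fun z : Y × (X × X) ↦ g (z.1, z.2.1) * g (z.1, z.2.2))
      (ρ.prod (p.prod p)) := hfst.integrable_mul hsnd
  have hadd : Integrable (fun z : Y × (X × X) ↦ g (z.1, z.2.1) ^ 2 + g (z.1, z.2.2) ^ 2)
      (ρ.prod (p.prod p)) := hfst.integrable_sq.add hsnd.integrable_sq
  have hsq := hg.integrable_sq.aestronglyMeasurable
  have hexpand (z : Y × (X × X)) : fiberDiff g z ^ 2 =
      g (z.1, z.2.1) ^ 2 + g (z.1, z.2.2) ^ 2 - 2 * (g (z.1, z.2.1) * g (z.1, z.2.2)) := by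
    unfold fiberDiff
    ring
  simp only [hexpand]
  rw [integral_sub hadd (hmul.const_mul 2),
    integral_add hfst.integrable_sq hsnd.integrable_sq, integral_const_mul,
    integral_comp_of_measurePreserving measurePreserving_prodMap_id_fst hsq,
    integral_comp_of_measurePreserving measurePreserving_prodMap_id_snd hsq]
  linarith [integral_fiber_mul_fiber_nonneg hmul]

end FiberDiff

section MMDKernel

variable {X : Type*}

/-- The `U`-statistic kernel whose average over all choices of one point from each of the four
samples is the asymmetric MMD statistic; its argument `((x, y), (x', y'))` consists of two training
points followed by two test points. -/
def mmdKernel (K : X → X → ℝ) : (X × X) × (X × X) → ℝ :=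
  fiberDiff (fiberDiff (Function.uncurry K) ∘ Prod.swap)

lemma mmdKernel_apply (K : X → X → ℝ) (x y x' y' : X) :
    mmdKernel K ((x, y), (x', y')) = K x' x - K x' y - K y' x + K y' y := by
  simp only [mmdKernel, fiberDiff, Function.comp_apply, Prod.swap_prod_mk,
    Function.uncurry_apply_pair]
  ring

lemma abs_mmdKernel_le {K : X → X → ℝ} {b : ℝ} (hb : ∀ x y, |K x y| ≤ b)
    (z : (X × X) × (X × X)) : |mmdKernel K z| ≤ 4 * b :=
  (abs_fiberDiff_le (fun w ↦ abs_fiberDiff_le (fun v ↦ hb v.1 v.2) w.swap) z).trans_eq (by ring)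

variable [MeasurableSpace X]

lemma measurable_mmdKernel {K : X → X → ℝ} (hK : Measurable (Function.uncurry K)) :
    Measurable (mmdKernel K) :=
  measurable_fiberDiff ((measurable_fiberDiff hK).comp measurable_swap)

variable {p : Measure X} [IsProbabilityMeasure p] {K : X → X → ℝ}

lemma memLp_fiberDiff_uncurry_swap {r : ℝ≥0∞} (hK : MemLp (Function.uncurry K) r (p.prod p)) :
    MemLp (fiberDiff (Function.uncurry K) ∘ Prod.swap) r ((p.prod p).prod p) :=
  (memLp_fiberDiff hK).comp_measurePreserving Measure.measurePreserving_swap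

lemma memLp_mmdKernel {r : ℝ≥0∞} (hK : MemLp (Function.uncurry K) r (p.prod p)) :
    MemLp (mmdKernel K) r ((p.prod p).prod (p.prod p)) :=
  memLp_fiberDiff (memLp_fiberDiff_uncurry_swap hK)

lemma integral_mmdKernel (hK : Integrable (Function.uncurry K) (p.prod p)) :
    ∫ z, mmdKernel K z ∂((p.prod p).prod (p.prod p)) = 0 := by
  rw [← memLp_one_iff_integrable] at hK
  exact integral_fiberDiff (memLp_one_iff_integrable.1 (memLp_fiberDiff_uncurry_swap hK))

lemma integral_mmdKernel_sq_le (hK : MemLp (Function.uncurry K) 2 (p.prod p)) :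
    ∫ z, mmdKernel K z ^ 2 ∂((p.prod p).prod (p.prod p)) ≤ 4 * ∫ x, ∫ y, K x y ^ 2 ∂p ∂p := by
  have hswap : MeasurePreserving Prod.swap ((p.prod p).prod p) (p.prod (p.prod p)) :=
    Measure.measurePreserving_swap
  calc ∫ z, mmdKernel K z ^ 2 ∂((p.prod p).prod (p.prod p))
      ≤ 2 * ∫ w, fiberDiff (Function.uncurry K) w.swap ^ 2 ∂((p.prod p).prod p) :=
        integral_fiberDiff_sq_le (memLp_fiberDiff_uncurry_swap hK)
    _ = 2 * ∫ z, fiberDiff (Function.uncurry K) z ^ 2 ∂(p.prod (p.prod p)) := by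
        rw [integral_comp_of_measurePreserving hswap
          (memLp_fiberDiff hK).integrable_sq.aestronglyMeasurable]
    _ ≤ 2 * (2 * ∫ w, Function.uncurry K w ^ 2 ∂(p.prod p)) := by
        gcongr
        exact integral_fiberDiff_sq_le hK
    _ = 4 * ∫ x, ∫ y, K x y ^ 2 ∂p ∂p := by
        rw [integral_prod _ hK.integrable_sq, ← mul_assoc]
        norm_num

end MMDKernel

section AsymMMD

variable {X : Type*} {m₁ n₁ m₂ n₂ : ℕ}

/-- The points of the four samples selected by a quadruple of indices: the units over which the
statistic `asymMMD` averages `mmdKernel`. -/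
def sampleQuadruple (s : (Fin m₁ × Fin n₁) × (Fin m₂ × Fin n₂)) :
    ((Fin m₁ → X) × (Fin n₁ → X)) × ((Fin m₂ → X) × (Fin n₂ → X)) → (X × X) × (X × X) :=
  Prod.map (Prod.map (fun x ↦ x s.1.1) fun y ↦ y s.1.2)
    (Prod.map (fun x ↦ x s.2.1) fun y ↦ y s.2.2)

lemma asymMMD_eq_expect [NeZero m₁] [NeZero n₁] [NeZero m₂] [NeZero n₂] (K : X → X → ℝ)
    (z : ((Fin m₁ → X) × (Fin n₁ → X)) × ((Fin m₂ → X) × (Fin n₂ → X))) :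
    asymMMD K m₁ n₁ m₂ n₂ z.1 z.2 = 𝔼 s, mmdKernel K (sampleQuadruple s z) := by
  have hm₁ : (m₁ : ℝ) ≠ 0 := NeZero.ne _
  have hn₁ : (n₁ : ℝ) ≠ 0 := NeZero.ne _
  have hm₂ : (m₂ : ℝ) ≠ 0 := NeZero.ne _
  have hn₂ : (n₂ : ℝ) ≠ 0 := NeZero.ne _
  simp only [asymMMD, sampleQuadruple, Prod.map, mmdKernel_apply,
    Fintype.expect_eq_sum_div_card, Fintype.card_prod, Fintype.card_fin, Fintype.sum_prod_type,
    Finset.sum_add_distrib, Finset.sum_sub_distrib, Finset.sum_const, Finset.card_univ,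
    nsmul_eq_mul, ← Finset.mul_sum, Nat.cast_mul]
  simp only [Finset.sum_comm (γ := Fin m₁), Finset.sum_comm (γ := Fin n₁)]
  field_simp

lemma abs_asymMMD_le [NeZero m₁] [NeZero n₁] [NeZero m₂] [NeZero n₂] {K : X → X → ℝ} {b : ℝ}
    (hb : ∀ x y, |K x y| ≤ b)
    (z : ((Fin m₁ → X) × (Fin n₁ → X)) × ((Fin m₂ → X) × (Fin n₂ → X))) :
    |asymMMD K m₁ n₁ m₂ n₂ z.1 z.2| ≤ 4 * b := by
  rw [asymMMD_eq_expect]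
  exact (Finset.abs_expect_le _ _).trans <|
    Finset.expect_le Finset.univ_nonempty fun s _ ↦ abs_mmdKernel_le hb _

variable [MeasurableSpace X]

/-- The law of a pair of independent i.i.d. samples of sizes `m` and `n` under the null
hypothesis, where both are drawn from `p`. -/
noncomputable abbrev nullLaw (p : Measure X) (m n : ℕ) : Measure ((Fin m → X) × (Fin n → X)) :=
  (Measure.pi fun _ ↦ p).prod (Measure.pi fun _ ↦ p)

lemma measurable_asymMMD {K : X → X → ℝ} (hK : Measurable (Function.uncurry K)) :
    Measurable fun z : ((Fin m₁ → X) × (Fin n₁ → X)) × ((Fin m₂ → X) × (Fin n₂ → X)) ↦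
      asymMMD K m₁ n₁ m₂ n₂ z.1 z.2 := by
  unfold asymMMD
  fun_prop

variable {p : Measure X} [IsProbabilityMeasure p] {K : X → X → ℝ} {N : ℕ} {b ν : ℝ}

lemma hasIIDBlocks_sampleQuadruple (p : Measure X) [IsProbabilityMeasure p] (hm₁ : N ≤ m₁)
    (hn₁ : N ≤ n₁) (hm₂ : N ≤ m₂) (hn₂ : N ≤ n₂) :
    HasIIDBlocks N sampleQuadruple ((nullLaw p m₁ n₁).prod (nullLaw p m₂ n₂))
      ((p.prod p).prod (p.prod p)) :=
  ((hasIIDBlocks_eval hm₁ p).prodMap (hasIIDBlocks_eval hn₁ p)).prodMap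
    ((hasIIDBlocks_eval hm₂ p).prodMap (hasIIDBlocks_eval hn₂ p))

lemma mgf_mmdKernel_le (hK : Measurable (Function.uncurry K)) (hb : ∀ x y, |K x y| ≤ b)
    (hν : ∫ x, ∫ y, K x y ^ 2 ∂p ∂p ≤ ν) {t : ℝ} (ht : |t| * (4 * b) ≤ 1) :
    mgf (mmdKernel K) ((p.prod p).prod (p.prod p)) t ≤ exp (4 * ν * t ^ 2) := by
  have hLp : MemLp (Function.uncurry K) 2 (p.prod p) :=
    .of_bound hK.aestronglyMeasurable b (.of_forall fun w ↦ hb w.1 w.2)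
  calc mgf (mmdKernel K) ((p.prod p).prod (p.prod p)) t
      ≤ exp (t ^ 2 * ∫ z, mmdKernel K z ^ 2 ∂((p.prod p).prod (p.prod p))) :=
        mgf_le_exp_sq_mul_integral_sq (measurable_mmdKernel hK).aestronglyMeasurable
          (abs_mmdKernel_le hb) (integral_mmdKernel (hLp.integrable one_le_two)) ht
    _ ≤ exp (t ^ 2 * (4 * ν)) := by
        gcongr
        exact (integral_mmdKernel_sq_le hLp).trans (by gcongr)
    _ = exp (4 * ν * t ^ 2) := by rw [mul_comm]

lemma mgf_asymMMD_le [NeZero m₁] [NeZero n₁] [NeZero m₂] [NeZero n₂] [NeZero N]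
    (hK : Measurable (Function.uncurry K)) (hb : ∀ x y, |K x y| ≤ b)
    (hν : ∫ x, ∫ y, K x y ^ 2 ∂p ∂p ≤ ν)
    (hm₁ : N ≤ m₁) (hn₁ : N ≤ n₁) (hm₂ : N ≤ m₂) (hn₂ : N ≤ n₂) {t : ℝ}
    (ht : |t| * (4 * b) ≤ 1) :
    mgf (fun z ↦ asymMMD K m₁ n₁ m₂ n₂ z.1 z.2)
      ((nullLaw p m₁ n₁).prod (nullLaw p m₂ n₂)) (N * t) ≤ exp (N * (4 * ν * t ^ 2)) := by
  have h_int : Integrable (fun z ↦ exp (t * mmdKernel K z)) ((p.prod p).prod (p.prod p)) :=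
    integrable_exp_mul_of_mem_Icc (measurable_mmdKernel hK).aemeasurable
      (.of_forall fun z ↦ abs_le.1 (abs_mmdKernel_le hb z))
  simp only [asymMMD_eq_expect]
  rw [exp_nat_mul]
  exact ((hasIIDBlocks_sampleQuadruple p hm₁ hn₁ hm₂ hn₂).mgf_expect_le h_int).trans <|
    pow_le_pow_left₀ mgf_nonneg (mgf_mmdKernel_le hK hb hν ht) N

lemma asymMMD_ae_eq_zero [NeZero m₁] [NeZero n₁] [NeZero m₂] [NeZero n₂]
    (hK : MemLp (Function.uncurry K) 2 (p.prod p)) (hzero : ∫ x, ∫ y, K x y ^ 2 ∂p ∂p = 0) :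
    ∀ᵐ z ∂(nullLaw p m₁ n₁).prod (nullLaw p m₂ n₂), asymMMD K m₁ n₁ m₂ n₂ z.1 z.2 = 0 := by
  have hsq : Integrable (fun z ↦ mmdKernel K z ^ 2) ((p.prod p).prod (p.prod p)) :=
    (memLp_mmdKernel hK).integrable_sq
  have hsq_zero : ∫ z, mmdKernel K z ^ 2 ∂((p.prod p).prod (p.prod p)) = 0 :=
    ((integral_mmdKernel_sq_le hK).trans_eq (by rw [hzero, mul_zero])).antisymm
      (integral_nonneg fun _ ↦ sq_nonneg _)
  have hker : ∀ᵐ z ∂((p.prod p).prod (p.prod p)), mmdKernel K z = 0 := by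
    filter_upwards [(integral_eq_zero_iff_of_nonneg (fun _ ↦ sq_nonneg _) hsq).1 hsq_zero] with z hz
    exact pow_eq_zero_iff two_ne_zero |>.1 hz
  have hunits : ∀ᵐ z ∂(nullLaw p m₁ n₁).prod (nullLaw p m₂ n₂),
      ∀ s, mmdKernel K (sampleQuadruple s z) = 0 :=
    ae_all_iff.2 fun s ↦ ((hasIIDBlocks_sampleQuadruple p (N := 1) NeZero.one_le NeZero.one_le
      NeZero.one_le NeZero.one_le).measurePreserving s).quasiMeasurePreserving.ae hker
  filter_upwards [hunits] with z hz
  rw [asymMMD_eq_expect]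
  simp only [hz, Finset.expect_const_zero]

end AsymMMD

section Tail

-- `θ = M √(ν / m) / (12 ν)`, with `M = max l₁ l₂`, makes the exponent
-- `-(N / m) * ((l₁ + l₂) * M / 3 - M ^ 2 / 36)`, and `M ^ 2` and `l₁ ^ 2 + l₂ ^ 2` are both at
-- most `(l₁ + l₂) * M`.
lemma exists_chernoff_parameter {ν m N l₁ l₂ : ℝ} (hν : 0 < ν) (hm : 0 < m) (hmN : m ≤ N)
    (hl₁ : 0 ≤ l₁) (hl₂ : 0 ≤ l₂) (hmax : max l₁ l₂ ^ 2 ≤ 9 * ν * m) :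
    ∃ θ, 0 ≤ θ ∧ θ ≤ 1 / 4 ∧
      -(N * θ) * (4 * (l₁ + l₂) * √(ν / m)) + N * (4 * ν * θ ^ 2) ≤
        -((l₁ ^ 2 + l₂ ^ 2) / 4) := by
  set M := max l₁ l₂
  set r := √(ν / m)
  have hl₁M : l₁ ≤ M := le_max_left _ _
  have hl₂M : l₂ ≤ M := le_max_right _ _
  have : 0 ≤ M := hl₁.trans hl₁M
  have : 0 ≤ r := sqrt_nonneg _
  have hr_sq : r ^ 2 = ν / m := sq_sqrt (by positivity)
  have hMr : M * r ≤ 3 * ν := by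
    refine le_of_sq_le_sq ?_ (by positivity)
    rw [mul_pow, hr_sq, ← mul_div_assoc, div_le_iff₀ hm]
    nlinarith
  have hM_sq : M ^ 2 ≤ (l₁ + l₂) * M := by
    have : M ≤ l₁ + l₂ := max_le (by linarith) (by linarith)
    rw [sq]
    gcongr
  have hl_sq : l₁ ^ 2 + l₂ ^ 2 ≤ (l₁ + l₂) * M := by nlinarith
  have hgain : (l₁ ^ 2 + l₂ ^ 2) / 4 ≤ (l₁ + l₂) * M / 3 - M ^ 2 / 36 := by
    nlinarith
  refine ⟨M * r / (12 * ν), by positivity, ?_, ?_⟩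
  · rw [div_le_iff₀ (by positivity)]
    linarith
  calc -(N * (M * r / (12 * ν))) * (4 * (l₁ + l₂) * r) + N * (4 * ν * (M * r / (12 * ν)) ^ 2)
      = -(N * (((l₁ + l₂) * M / 3 - M ^ 2 / 36) * (r ^ 2 / ν))) := by field_simp; ring
    _ = -(N / m * ((l₁ + l₂) * M / 3 - M ^ 2 / 36)) := by rw [hr_sq]; field_simp
    _ ≤ -((l₁ ^ 2 + l₂ ^ 2) / 4) := by
        refine neg_le_neg (hgain.trans (le_mul_of_one_le_left ?_ ((one_le_div hm).2 hmN)))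
        exact le_trans (by positivity) hgain

variable {X : Type*} [MeasurableSpace X] {p : Measure X} [IsProbabilityMeasure p] {K : X → X → ℝ}
  {m₁ n₁ m₂ n₂ : ℕ} {ν m l₁ l₂ : ℝ}

lemma measureReal_le_asymMMD_le (hK : Measurable (Function.uncurry K))
    (hb : ∀ x y, |K x y| ≤ 1) (hνK : ∫ x, ∫ y, K x y ^ 2 ∂p ∂p ≤ ν) (hν : 0 < ν) (hm : 0 < m)
    (hm₁ : m ≤ m₁) (hn₁ : m ≤ n₁) (hm₂ : m ≤ m₂) (hn₂ : m ≤ n₂)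
    (hl₁ : 0 ≤ l₁) (hl₂ : 0 ≤ l₂) (hmax : max l₁ l₂ ^ 2 ≤ 9 * ν * m) :
    ((nullLaw p m₁ n₁).prod (nullLaw p m₂ n₂)).real
        {z | 4 * (l₁ + l₂) * √(ν / m) ≤ asymMMD K m₁ n₁ m₂ n₂ z.1 z.2} ≤
      exp (-((l₁ ^ 2 + l₂ ^ 2) / 4)) := by
  obtain ⟨N, hmN, hNm₁, hNn₁, hNm₂, hNn₂⟩ :
      ∃ N : ℕ, m ≤ N ∧ N ≤ m₁ ∧ N ≤ n₁ ∧ N ≤ m₂ ∧ N ≤ n₂ := by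
    refine ⟨min (min m₁ n₁) (min m₂ n₂), ?_, by omega, by omega, by omega, by omega⟩
    push_cast
    exact le_min (le_min hm₁ hn₁) (le_min hm₂ hn₂)
  have hN : 0 < N := Nat.cast_pos.1 (hm.trans_le hmN)
  have : NeZero N := ⟨hN.ne'⟩
  have : NeZero m₁ := ⟨(hN.trans_le hNm₁).ne'⟩
  have : NeZero n₁ := ⟨(hN.trans_le hNn₁).ne'⟩
  have : NeZero m₂ := ⟨(hN.trans_le hNm₂).ne'⟩
  have : NeZero n₂ := ⟨(hN.trans_le hNn₂).ne'⟩
  obtain ⟨θ, hθ, hθ_le, hexponent⟩ := exists_chernoff_parameter hν hm hmN hl₁ hl₂ hmax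
  have h_int : Integrable (fun z ↦ exp (N * θ * asymMMD K m₁ n₁ m₂ n₂ z.1 z.2))
      ((nullLaw p m₁ n₁).prod (nullLaw p m₂ n₂)) :=
    integrable_exp_mul_of_mem_Icc (measurable_asymMMD hK).aemeasurable
      (.of_forall fun z ↦ abs_le.1 (abs_asymMMD_le hb z))
  refine (measure_ge_le_exp_mul_mgf _ (by positivity) h_int).trans ?_
  have hθ_abs : |θ| * (4 * 1) ≤ 1 := by
    rw [abs_of_nonneg hθ]
    linarith
  refine (mul_le_mul_of_nonneg_left (mgf_asymMMD_le hK hb hνK hNm₁ hNn₁ hNm₂ hNn₂ hθ_abs)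
    (exp_pos _).le).trans ?_
  rwa [← exp_add, exp_le_exp]

-- At `ν = 0` the quotient in `hmax` is `0`, and the bound holds because the statistic vanishes
-- almost surely.
lemma measure_asymMMD_gt_le (hK : Measurable (Function.uncurry K))
    (hb : ∀ x y, |K x y| ≤ 1) (hνK : ∫ x, ∫ y, K x y ^ 2 ∂p ∂p ≤ ν) (hm : 0 < m)
    (hm₁ : m ≤ m₁) (hn₁ : m ≤ n₁) (hm₂ : m ≤ m₂) (hn₂ : m ≤ n₂)
    (hl₁ : 0 ≤ l₁) (hl₂ : 0 ≤ l₂) (hmax : max l₁ l₂ ^ 2 / (9 * ν) ≤ m) :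
    (nullLaw p m₁ n₁).prod (nullLaw p m₂ n₂)
        {z | 4 * (l₁ + l₂) * √(ν / m) < asymMMD K m₁ n₁ m₂ n₂ z.1 z.2} ≤
      ENNReal.ofReal (exp (-((l₁ ^ 2 + l₂ ^ 2) / 4))) := by
  have hsecond : 0 ≤ ∫ x, ∫ y, K x y ^ 2 ∂p ∂p :=
    integral_nonneg fun _ ↦ integral_nonneg fun _ ↦ sq_nonneg _
  obtain rfl | hν := (hsecond.trans hνK).eq_or_lt
  · have : NeZero m₁ := ⟨(Nat.cast_pos.1 (hm.trans_le hm₁)).ne'⟩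
    have : NeZero n₁ := ⟨(Nat.cast_pos.1 (hm.trans_le hn₁)).ne'⟩
    have : NeZero m₂ := ⟨(Nat.cast_pos.1 (hm.trans_le hm₂)).ne'⟩
    have : NeZero n₂ := ⟨(Nat.cast_pos.1 (hm.trans_le hn₂)).ne'⟩
    have hLp : MemLp (Function.uncurry K) 2 (p.prod p) :=
      .of_bound hK.aestronglyMeasurable 1 (.of_forall fun w ↦ hb w.1 w.2)
    refine (measure_eq_zero_iff_ae_notMem.2 ?_).trans_le zero_le
    filter_upwards [asymMMD_ae_eq_zero hLp (hνK.antisymm hsecond)] with z hz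
    simp only [hz, zero_div, sqrt_zero, mul_zero, lt_irrefl, not_false_eq_true]
  · rw [div_le_iff₀ (by positivity), mul_comm m] at hmax
    refine (measure_mono (Set.ofPred_subset_ofPred.2 fun _ ↦ le_of_lt)).trans ?_
    rw [← ofReal_measureReal]
    exact ENNReal.ofReal_le_ofReal
      (measureReal_le_asymMMD_le hK hb hνK hν hm hm₁ hn₁ hm₂ hn₂ hl₁ hl₂ hmax)

end Tail

lemma exists_measurableSet_measure_prodMk_preimage_le {Ω Ω' : Type*} [MeasurableSpace Ω]
    [MeasurableSpace Ω'] {μ : Measure Ω} {ρ : Measure Ω'} [IsProbabilityMeasure μ] [SFinite ρ]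
    {S : Set (Ω × Ω')} (hS : MeasurableSet S) {α γ : ℝ≥0∞} (hα : α ≠ 0) (hα_top : α ≠ ⊤)
    (h : μ.prod ρ S ≤ α * γ) :
    ∃ E, MeasurableSet E ∧ 1 - γ ≤ μ E ∧ ∀ a ∈ E, ρ (Prod.mk a ⁻¹' S) ≤ α := by
  have hfiber : Measurable fun a ↦ ρ (Prod.mk a ⁻¹' S) := measurable_measure_prodMk_left hS
  have hE : MeasurableSet {a | ρ (Prod.mk a ⁻¹' S) ≤ α} := measurableSet_le hfiber measurable_const
  refine ⟨_, hE, ?_, fun _ ↦ id⟩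
  have hbad : μ {a | ρ (Prod.mk a ⁻¹' S) ≤ α}ᶜ ≤ γ := by
    calc μ {a | ρ (Prod.mk a ⁻¹' S) ≤ α}ᶜ ≤ μ {a | α ≤ ρ (Prod.mk a ⁻¹' S)} :=
          measure_mono fun a (ha : ¬ρ (Prod.mk a ⁻¹' S) ≤ α) ↦ le_of_not_ge ha
      _ ≤ (∫⁻ a, ρ (Prod.mk a ⁻¹' S) ∂μ) / α :=
          meas_ge_le_lintegral_div hfiber.aemeasurable hα hα_top
      _ ≤ γ := by
          rw [← Measure.prod_apply hS]
          exact ENNReal.div_le_of_le_mul' h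
  rw [tsub_le_iff_right, ← prob_add_prob_compl (μ := μ) hE]
  gcongr

lemma exp_neg_sq_sqrt_log_le {α γ : ℝ} (hα : 0 < α) (hγ : 0 < γ) :
    exp (-((√(4 * log (4 / α)) ^ 2 + √(4 * log (8 / γ)) ^ 2) / 4)) ≤ α * γ := by
  have hsqrt (x : ℝ) : x ≤ √x ^ 2 := (sqrt_le_left (sqrt_nonneg x)).1 le_rfl
  calc exp (-((√(4 * log (4 / α)) ^ 2 + √(4 * log (8 / γ)) ^ 2) / 4))
      ≤ exp (-log (4 / α) + -log (8 / γ)) := by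
        gcongr
        linarith [hsqrt (4 * log (4 / α)), hsqrt (4 * log (8 / γ))]
    _ = α / 4 * (γ / 8) := by
        rw [exp_add, exp_neg, exp_neg, exp_log (by positivity), exp_log (by positivity), inv_div,
          inv_div]
    _ ≤ α * γ := by gcongr <;> linarith

theorem asym_mmd_type_I_error_testonly_bootstrap_general {X : Type*} [MeasurableSpace X]
    (K : X → X → ℝ) (hKmeas : Measurable (Function.uncurry K)) (hKbdd : ∀ x y, |K x y| ≤ 1)
    (p : Measure X) [IsProbabilityMeasure p] (ν : ℝ) (hν : ∫ x, ∫ y, K x y ^ 2 ∂p ∂p ≤ ν)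
    (n1X n1Y n2X n2Y : ℕ) (ca : ℝ) (hca : 0 < ca)
    (hbal1 : ca * ((n1X + n1Y + n2X + n2Y : ℕ) : ℝ) ≤ n1X)
    (hbal2 : ca * ((n1X + n1Y + n2X + n2Y : ℕ) : ℝ) ≤ n1Y)
    (hbal3 : ca * ((n1X + n1Y + n2X + n2Y : ℕ) : ℝ) ≤ n2X)
    (hbal4 : ca * ((n1X + n1Y + n2X + n2Y : ℕ) : ℝ) ≤ n2Y)
    (α γ : ℝ) (hα : 0 < α) (hγ : 0 < γ)
    (hn : ((n1X + n1Y + n2X + n2Y : ℕ) : ℝ) >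
      max √(4 * log (8 / γ)) √(4 * log (4 / α)) ^ 2 / (9 * ν * ca)) :
    ∃ E, MeasurableSet E ∧ 1 - ENNReal.ofReal γ ≤ nullLaw p n1X n1Y E ∧
      ∀ dtr ∈ E, nullLaw p n2X n2Y {dte | asymMMD K n1X n1Y n2X n2Y dtr dte >
        4 * (√1.1 * √(4 * log (4 / α)) + √(4 * log (8 / γ))) *
          √(ν / (ca * ((n1X + n1Y + n2X + n2Y : ℕ) : ℝ)))} ≤ ENNReal.ofReal α := by
  set n : ℝ := ((n1X + n1Y + n2X + n2Y : ℕ) : ℝ)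
  set threshold := 4 * (√1.1 * √(4 * log (4 / α)) + √(4 * log (8 / γ))) * √(ν / (ca * n))
  have hν_nonneg : 0 ≤ ν :=
    (integral_nonneg fun _ ↦ integral_nonneg fun _ ↦ sq_nonneg _).trans hν
  have hn_pos : 0 < n := lt_of_le_of_lt (by positivity) hn
  have hmax : max √(4 * log (4 / α)) √(4 * log (8 / γ)) ^ 2 / (9 * ν) ≤ ca * n := by
    rw [max_comm, mul_comm ca, ← div_le_iff₀ hca, div_div]
    exact hn.le
  have hthreshold :
      4 * (√(4 * log (4 / α)) + √(4 * log (8 / γ))) * √(ν / (ca * n)) ≤ threshold := by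
    unfold threshold
    gcongr
    exact le_mul_of_one_le_left (sqrt_nonneg _) (one_le_sqrt.2 (by norm_num))
  refine exists_measurableSet_measure_prodMk_preimage_le
    (measurableSet_lt measurable_const (measurable_asymMMD hKmeas))
    (ENNReal.ofReal_pos.2 hα).ne' ENNReal.ofReal_ne_top ?_
  calc (nullLaw p n1X n1Y).prod (nullLaw p n2X n2Y)
          {z | threshold < asymMMD K n1X n1Y n2X n2Y z.1 z.2}
      ≤ (nullLaw p n1X n1Y).prod (nullLaw p n2X n2Y)
          {z | 4 * (√(4 * log (4 / α)) + √(4 * log (8 / γ))) * √(ν / (ca * n)) <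
            asymMMD K n1X n1Y n2X n2Y z.1 z.2} :=
        measure_mono fun _ ↦ hthreshold.trans_lt
    _ ≤ ENNReal.ofReal (exp (-((√(4 * log (4 / α)) ^ 2 + √(4 * log (8 / γ)) ^ 2) / 4))) :=
        measure_asymMMD_gt_le hKmeas hKbdd hν (by positivity) hbal1 hbal2 hbal3 hbal4
          (sqrt_nonneg _) (sqrt_nonneg _) hmax
    _ ≤ ENNReal.ofReal α * ENNReal.ofReal γ := by
        rw [← ENNReal.ofReal_mul hα.le]
        exact ENNReal.ofReal_le_ofReal (exp_neg_sq_sqrt_log_le hα hγ)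

/-- Theorem 3.2, Type-I error part (test-only bootstrap): under `H₀ : p = q`, with
`λ₍₂₎,₁ = √(4 log(4/α))`, `λ₍₁₎ = √(4 log(8/γ))` and threshold
`t_thres = 4(√1.1 λ₍₂₎,₁ + λ₍₁₎)√(ν/(c_a n))`, if `n > (λ₍₁₎/(0.1ν))²/(8c_a)` and
`n > max{λ₍₁₎, λ₍₂₎,₁}²/(9νc_a)`, then there is a good event `E` of training data with
`P₍₁₎(E) ≥ 1 − γ`, under which `P₍₂₎[T̂_a > t_thres] ≤ α`. -/
theorem asym_mmd_type_I_error_testonly_bootstrap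
    {d : ℕ} (𝒳 : Set (EuclideanSpace ℝ (Fin d))) (h𝒳 : MeasurableSet 𝒳)
    (K : 𝒳 → 𝒳 → ℝ)
    (hKmeas : Measurable (Function.uncurry K))
    (hKsym : ∀ x y, K x y = K y x)
    (hKpsd : ∀ (m : ℕ) (z : Fin m → 𝒳) (a : Fin m → ℝ),
      0 ≤ ∑ i, ∑ j, a i * a j * K (z i) (z j))
    (hKbdd : ∀ x y, |K x y| ≤ 1)
    (p q : Measure 𝒳) [IsProbabilityMeasure p] [IsProbabilityMeasure q]
    (ν : ℝ) (hν1 : ν ≤ 1)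
    (hνpp : ∫ x, ∫ y, (K x y)^2 ∂p ∂p ≤ ν)
    (hνpq : ∫ x, ∫ y, (K x y)^2 ∂q ∂p ≤ ν)
    (hνqq : ∫ x, ∫ y, (K x y)^2 ∂q ∂q ≤ ν)
    (n1X n1Y n2X n2Y : ℕ) (ca : ℝ) (hca : 0 < ca) (hca1 : ca < 1)
    (hbal1 : ca * ((n1X + n1Y + n2X + n2Y : ℕ) : ℝ) ≤ (n1X : ℝ))
    (hbal2 : ca * ((n1X + n1Y + n2X + n2Y : ℕ) : ℝ) ≤ (n1Y : ℝ))
    (hbal3 : ca * ((n1X + n1Y + n2X + n2Y : ℕ) : ℝ) ≤ (n2X : ℝ))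
    (hbal4 : ca * ((n1X + n1Y + n2X + n2Y : ℕ) : ℝ) ≤ (n2Y : ℝ))
    (hH0 : p = q)
    (α γ : ℝ) (hα : 0 < α) (hα1 : α < 1) (hγ : 0 < γ) (hγ1 : γ < 1)
    (hn1 : ((n1X + n1Y + n2X + n2Y : ℕ) : ℝ) >
      (Real.sqrt (4 * Real.log (8/γ)) / (0.1 * ν))^2 / (8 * ca))
    (hn2 : ((n1X + n1Y + n2X + n2Y : ℕ) : ℝ) >
      (max (Real.sqrt (4 * Real.log (8/γ))) (Real.sqrt (4 * Real.log (4/α))))^2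
        / (9 * ν * ca)) :
    ∃ E : Set ((Fin n1X → 𝒳) × (Fin n1Y → 𝒳)), MeasurableSet E ∧
      1 - ENNReal.ofReal γ ≤
        ((Measure.pi fun _ : Fin n1X => p).prod (Measure.pi fun _ : Fin n1Y => q)) E ∧
      ∀ dtr ∈ E,
        ((Measure.pi fun _ : Fin n2X => p).prod (Measure.pi fun _ : Fin n2Y => q))
          {dte : (Fin n2X → 𝒳) × (Fin n2Y → 𝒳) |
            asymMMD K n1X n1Y n2X n2Y dtr dte >
              4 * (Real.sqrt 1.1 * Real.sqrt (4 * Real.log (4/α))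
                    + Real.sqrt (4 * Real.log (8/γ)))
                * Real.sqrt (ν/(ca * ((n1X + n1Y + n2X + n2Y : ℕ) : ℝ)))}
          ≤ ENNReal.ofReal α := by
  subst hH0
  exact asym_mmd_type_I_error_testonly_bootstrap_general K hKmeas hKbdd p ν hνpp n1X n1Y n2X n2Y ca
    hca hbal1 hbal2 hbal3 hbal4 α γ hα hγ hn2
end

section
/- (Theorem 3.2, power part, test-only bootstrap.) Assume the alternative hypothesis p ≠ q with δ_K > 0. Let α_level, γ ∈ (0,1), define λ_{(2),1} = √(4 log(4/α_level)), λ_{(1)} = √(4 log(8/γ)), and the threshold t_thres = 4 (√(1.1) λ_{(2),1} + λ_{(1)}) √(ν/(c_a n)). If n > (λ_{(1)}/(0.1 ν))²/(8 c_a) and for some λ_{(2),2} > 0, n > (1/c_a) · max{ max{λ_{(1)}, λ_{(2),1}, λ_{(2),2}}²/(9 ν), (16 ν/δ_K²)·(2 λ_{(1)} + √(1.1)(λ_{(2),1} + λ_{(2),2}))² }, then there exists a measurable set E of training configurations D_tr with P_(1)(E) ≥ 1 − γ such that for every D_tr ∈ E, the conditional probability P_(2)[ T̂_a ≤ t_thres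 ] ≤ 4 e^{−λ_{(2),2}²/4}. -/
open MeasureTheory Real
open scoped BigOperators ENNReal

/-- The squared population MMD `δ_K = ∬ K d(p−q)d(p−q)`, written out as
`∬K dp dp − 2∬K dp dq + ∬K dq dq`. -/
noncomputable def deltaK {𝒳 : Type*} [MeasurableSpace 𝒳] (K : 𝒳 → 𝒳 → ℝ)
    (p q : Measure 𝒳) : ℝ :=
  (∫ x, ∫ y, K x y ∂p ∂p) - 2 * (∫ x, ∫ y, K x y ∂q ∂p) + (∫ x, ∫ y, K x y ∂q ∂q)

/-!
For fixed training data the statistic is a difference of two empirical means,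
`T̂_a = 𝔼 i, w (x⁽²⁾ i) - 𝔼 j, w (y⁽²⁾ j)`, where `w` is the empirical witness function of the
training sample. By symmetry of `K` its conditional mean is the same expression in the training
sample with `w` replaced by the population witness `u`, and the mean of that is `δ_K`. So one
Bernstein bound for a difference of two empirical means serves both stages. The variance of `u` is
controlled by `ν`; that of `w` by an empirical average of `z ↦ 𝔼 K(z, ·)²`, which Hoeffding's
inequality keeps below `1.1 ν` on a training event of large probability.
-/

open ProbabilityTheory

lemma exp_le_one_add_self_add_sq {x : ℝ} (hx : x ≤ 3 / 2) : exp x ≤ 1 + x + x ^ 2 := by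
  rcases le_total x (-1) with hx_neg | hx_neg
  · have : exp x ≤ 1 := exp_le_one_iff.2 (by linarith)
    nlinarith
  rcases le_total x 1 with hx_one | hx_one
  · linarith [(abs_le.1 (abs_exp_sub_one_sub_id_le (abs_le.2 ⟨hx_neg, hx_one⟩))).2]
  · obtain ⟨u, rfl⟩ : ∃ u, x = 1 + u := ⟨x - 1, by ring⟩
    have hu : 0 ≤ u := by linarith
    have hexp_u : exp u ≤ 1 + u + u ^ 2 / 2 + 2 / 9 * u ^ 3 := by
      have := exp_bound' hu (by linarith) (n := 3) (by norm_num)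
      norm_num [Finset.sum_range_succ, Nat.factorial] at this
      linarith
    calc exp (1 + u) = exp 1 * exp u := exp_add 1 u
      _ ≤ 2.7183 * (1 + u + u ^ 2 / 2 + 2 / 9 * u ^ 3) := by
        gcongr
        linarith [exp_one_lt_d9]
      _ ≤ 1 + (1 + u) + (1 + u) ^ 2 := by
        have : u ≤ 1 / 2 := by linarith
        nlinarith [pow_nonneg hu 2, mul_nonneg hu (sub_nonneg.2 this),
          mul_nonneg (pow_nonneg hu 2) (sub_nonneg.2 this)]

lemma sqrt_four_mul (x : ℝ) : √(4 * x) = 2 * √x := by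
  rw [sqrt_mul zero_le_four, show (4 : ℝ) = 2 ^ 2 by norm_num, sqrt_sq zero_le_two]

lemma four_mul_sqrt_div_mul_le {ν m δ Q : ℝ} (hδ : 0 < δ) (hν : 0 ≤ ν) (hm : 0 < m)
    (hQ : 16 * ν / δ ^ 2 * Q ^ 2 ≤ m) : 4 * √(ν / m) * Q ≤ δ := by
  refine le_of_sq_le_sq ?_ hδ.le
  calc (4 * √(ν / m) * Q) ^ 2 = 16 * ν / δ ^ 2 * Q ^ 2 * δ ^ 2 / m := by
        rw [mul_pow, mul_pow, sq_sqrt (by positivity)]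
        field_simp
        ring
    _ ≤ m * δ ^ 2 / m := by gcongr
    _ = δ ^ 2 := mul_div_cancel_left₀ _ hm.ne'

lemma exp_neg_sq_sqrt_four_mul_log_div_four_le {x : ℝ} (hx : 0 < x) :
    exp (-√(4 * log x) ^ 2 / 4) ≤ x⁻¹ := by
  rw [← exp_log (inv_pos.2 hx), log_inv, exp_le_exp, sq_sqrt']
  linarith [le_max_left (4 * log x) 0]

lemma sq_sub_le_two_mul_add {a b A B : ℝ} (ha : a ^ 2 ≤ A) (hb : b ^ 2 ≤ B) :
    (a - b) ^ 2 ≤ 2 * (A + B) := by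
  nlinarith [sq_nonneg (a + b)]

lemma abs_sq_kernel_le {X : Type*} {K : X → X → ℝ} {C : ℝ} (hKC : ∀ x y, |K x y| ≤ C) (x y : X) :
    |(K ^ 2) x y| ≤ C ^ 2 := by
  simpa using pow_le_pow_left₀ (abs_nonneg _) (hKC x y) 2

lemma measurable_expect {ι Ω : Type*} [Fintype ι] [MeasurableSpace Ω] {f : ι → Ω → ℝ}
    (hf : ∀ i, Measurable (f i)) : Measurable fun ω ↦ 𝔼 i, f i ω := by
  simp only [Fintype.expect_eq_sum_div_card]
  exact (Finset.measurable_sum _ fun i _ ↦ hf i).div_const _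

lemma integral_expect {ι Ω : Type*} [Fintype ι] [MeasurableSpace Ω] {μ : Measure Ω}
    {f : ι → Ω → ℝ} (hf : ∀ i, Integrable (f i) μ) :
    ∫ ω, 𝔼 i, f i ω ∂μ = 𝔼 i, ∫ ω, f i ω ∂μ := by
  simp only [Fintype.expect_eq_sum_div_card, integral_div, integral_finsetSum _ fun i _ ↦ hf i]

lemma abs_expect_le_of_forall_abs_le {ι : Type*} [Fintype ι] {f : ι → ℝ} {C : ℝ} (hC : 0 ≤ C)
    (hf : ∀ i, |f i| ≤ C) : |𝔼 i, f i| ≤ C := by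
  cases isEmpty_or_nonempty ι
  · simpa using hC
  · exact (Finset.abs_expect_le _ _).trans (Finset.expect_le Finset.univ_nonempty fun i _ ↦ hf i)

lemma sq_expect_le_expect_sq {ι : Type*} [Fintype ι] (f : ι → ℝ) :
    (𝔼 i, f i) ^ 2 ≤ 𝔼 i, f i ^ 2 := by
  cases isEmpty_or_nonempty ι
  · simp
  · simpa using Finset.expect_mul_sq_le_sq_mul_sq Finset.univ f 1

lemma sq_integral_le_integral_sq {Ω : Type*} [MeasurableSpace Ω] {μ : Measure Ω}
    [IsProbabilityMeasure μ] {f : Ω → ℝ} (hf : MemLp f 2 μ) :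
    (∫ ω, f ω ∂μ) ^ 2 ≤ ∫ ω, f ω ^ 2 ∂μ := by
  simpa [variance_eq_sub hf] using variance_nonneg f μ

section Concentration

variable {Ω : Type*} [MeasurableSpace Ω] {μ : Measure Ω} [IsProbabilityMeasure μ] {f : Ω → ℝ}

lemma mgf_le_exp_of_integral_sq_le {M v θ : ℝ} (hf : MemLp f 2 μ) (hfM : ∀ᵐ ω ∂μ, f ω ≤ M)
    (hfv : ∫ ω, f ω ^ 2 ∂μ ≤ v) (hθ : 0 ≤ θ) (hθM : θ * M ≤ 3 / 2) :
    mgf f μ θ ≤ exp (θ * ∫ ω, f ω ∂μ + θ ^ 2 * v) := by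
  have hlin : Integrable (fun ω ↦ 1 + θ * f ω) μ :=
    (integrable_const 1).add ((hf.integrable one_le_two).const_mul θ)
  have hsq : Integrable (fun ω ↦ θ ^ 2 * f ω ^ 2) μ := hf.integrable_sq.const_mul _
  calc mgf f μ θ ≤ ∫ ω, 1 + θ * f ω + θ ^ 2 * f ω ^ 2 ∂μ := by
        refine integral_mono_of_nonneg (.of_forall fun ω ↦ (exp_pos _).le) (hlin.add hsq) ?_
        filter_upwards [hfM] with ω hω
        rw [← mul_pow]
        exact exp_le_one_add_self_add_sq ((mul_le_mul_of_nonneg_left hω hθ).trans hθM)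
    _ = θ * ∫ ω, f ω ∂μ + θ ^ 2 * ∫ ω, f ω ^ 2 ∂μ + 1 := by
        rw [integral_add hlin hsq, integral_add (integrable_const 1)
          ((hf.integrable one_le_two).const_mul θ), integral_const_mul, integral_const_mul]
        simp only [integral_const, probReal_univ, one_smul]
        ring
    _ ≤ θ * ∫ ω, f ω ∂μ + θ ^ 2 * v + 1 := by gcongr
    _ ≤ exp (θ * ∫ ω, f ω ∂μ + θ ^ 2 * v) := add_one_le_exp _

variable {ι : Type*} [Fintype ι]

lemma measureReal_pi_expect_ge_le_of_mgf_le {θ b c : ℝ} (hθ : 0 ≤ θ)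
    (hint : Integrable (fun ω ↦ exp (θ * f ω)) μ) (hmgf : mgf f μ θ ≤ exp (θ * b - c)) :
    (Measure.pi fun _ : ι ↦ μ).real {x | b ≤ 𝔼 i, f (x i)} ≤ exp (-(Fintype.card ι * c)) := by
  set N : ℝ := (Fintype.card ι : ℝ)
  have hexp_sum : (fun x : ι → Ω ↦ exp (θ * ∑ i, f (x i))) =
      fun x ↦ ∏ i, exp (θ * f (x i)) := by
    ext x
    rw [Finset.mul_sum, exp_sum]
  have hint_pi : Integrable (fun x : ι → Ω ↦ exp (θ * ∑ i, f (x i)))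
      (Measure.pi fun _ ↦ μ) := hexp_sum ▸ Integrable.fintype_prod fun _ ↦ hint
  calc (Measure.pi fun _ : ι ↦ μ).real {x | b ≤ 𝔼 i, f (x i)}
      ≤ (Measure.pi fun _ : ι ↦ μ).real {x | N * b ≤ ∑ i, f (x i)} := by
        refine measureReal_mono fun x hx ↦ ?_
        rw [Set.mem_ofPred_eq, ← Fintype.card_mul_expect]
        exact mul_le_mul_of_nonneg_left hx (Nat.cast_nonneg _)
    _ ≤ exp (-θ * (N * b)) * mgf (fun x : ι → Ω ↦ ∑ i, f (x i)) (Measure.pi fun _ ↦ μ) θ :=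
        measure_ge_le_exp_mul_mgf _ hθ hint_pi
    _ = exp (-θ * (N * b)) * mgf f μ θ ^ Fintype.card ι := by
        rw [mgf, hexp_sum, integral_fintype_prod_eq_pow (fun ω ↦ exp (θ * f ω)), mgf]
    _ ≤ exp (-θ * (N * b)) * exp (θ * b - c) ^ Fintype.card ι := by
        gcongr
        exact mgf_nonneg
    _ = exp (-(N * c)) := by
        rw [← exp_nat_mul, ← exp_add]
        congr 1
        ring

lemma measureReal_pi_expect_ge_le_of_integral_sq_le {M v τ : ℝ} (hf : MemLp f 2 μ)
    (hfM : ∀ᵐ ω ∂μ, f ω ≤ M) (hfv : ∫ ω, f ω ^ 2 ∂μ ≤ v) (hv : 0 < v) (hτ : 0 ≤ τ)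
    (hτM : M * τ ≤ 3 * v) :
    (Measure.pi fun _ : ι ↦ μ).real {x | ∫ ω, f ω ∂μ + τ ≤ 𝔼 i, f (x i)} ≤
      exp (-(Fintype.card ι * (τ ^ 2 / (4 * v)))) := by
  have hθ : 0 ≤ τ / (2 * v) := by positivity
  have hθM : τ / (2 * v) * M ≤ 3 / 2 := by
    rw [div_mul_eq_mul_div, div_le_iff₀ (by positivity)]
    linarith
  refine measureReal_pi_expect_ge_le_of_mgf_le hθ ?_
    ((mgf_le_exp_of_integral_sq_le hf hfM hfv hθ hθM).trans_eq ?_)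
  · refine (integrable_const (exp (τ / (2 * v) * M))).mono'
      (hf.aemeasurable.const_mul _).exp.aestronglyMeasurable ?_
    filter_upwards [hfM] with ω hω
    rw [norm_of_nonneg (exp_pos _).le]
    gcongr
  · congr 1
    field_simp
    ring

lemma measureReal_pi_expect_ge_le_of_mem_Icc {a b τ : ℝ} (hf : AEMeasurable f μ)
    (hfab : ∀ᵐ ω ∂μ, f ω ∈ Set.Icc a b) (hτ : 0 ≤ τ) :
    (Measure.pi fun _ : ι ↦ μ).real {x | ∫ ω, f ω ∂μ + τ ≤ 𝔼 i, f (x i)} ≤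
      exp (-(Fintype.card ι * (2 * τ ^ 2 / (b - a) ^ 2))) := by
  rcases eq_or_ne b a with rfl | hab
  · simp
  have hab' : b - a ≠ 0 := sub_ne_zero.2 hab
  refine measureReal_pi_expect_ge_le_of_mgf_le (θ := 4 * τ / (b - a) ^ 2) (by positivity)
    (integrable_exp_mul_of_mem_Icc hf hfab) ?_
  calc mgf f μ (4 * τ / (b - a) ^ 2)
      = mgf (fun ω ↦ f ω - ∫ ω, f ω ∂μ + ∫ ω, f ω ∂μ) μ (4 * τ / (b - a) ^ 2) := by
        simp only [sub_add_cancel]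
    _ ≤ exp (((‖b - a‖₊ / 2) ^ 2 : NNReal) * (4 * τ / (b - a) ^ 2) ^ 2 / 2) *
          exp (4 * τ / (b - a) ^ 2 * ∫ ω, f ω ∂μ) := by
        rw [mgf_add_const]
        gcongr
        exact (hasSubgaussianMGF_of_mem_Icc hf hfab).mgf_le _
    _ = exp (4 * τ / (b - a) ^ 2 * (∫ ω, f ω ∂μ + τ) - 2 * τ ^ 2 / (b - a) ^ 2) := by
        rw [← exp_add]
        congr 1
        push_cast
        rw [div_pow, norm_eq_abs, sq_abs]
        field_simp
        ring

end Concentration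

section TwoSample

variable {ι κ Ω : Type*} [Fintype ι] [Fintype κ] [MeasurableSpace Ω] {p q : Measure Ω}
  [IsProbabilityMeasure p] [IsProbabilityMeasure q]

lemma measureReal_prod_add_ge_le {α β : Type*} [MeasurableSpace α] [MeasurableSpace β]
    {P : Measure α} {Q : Measure β} [IsProbabilityMeasure P] [IsProbabilityMeasure Q]
    (F : α → ℝ) (G : β → ℝ) (a b : ℝ) :
    (P.prod Q).real {z | a + b ≤ F z.1 + G z.2} ≤ P.real {x | a ≤ F x} + Q.real {y | b ≤ G y} := by
  calc (P.prod Q).real {z | a + b ≤ F z.1 + G z.2}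
      ≤ (P.prod Q).real ({x | a ≤ F x} ×ˢ Set.univ ∪ Set.univ ×ˢ {y | b ≤ G y}) := by
        refine measureReal_mono fun z hz ↦ ?_
        by_contra! hz'
        simp only [Set.mem_union, Set.mem_prod, Set.mem_ofPred_eq, Set.mem_univ, and_true,
          true_and, not_or, not_le] at hz hz'
        linarith
    _ ≤ P.real {x | a ≤ F x} + Q.real {y | b ≤ G y} := by
        refine (measureReal_union_le _ _).trans_eq ?_
        simp only [measureReal_prod_prod, probReal_univ, mul_one, one_mul]

/-- The joint law of a sample from `p` indexed by `ι` and an independent sample from `q` indexed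
by `κ`. With `ι = Fin n_X`, `κ = Fin n_Y` it is the law `P₍₁₎` or `P₍₂₎` of the paper. -/
noncomputable abbrev twoSampleLaw {Ω : Type*} [MeasurableSpace Ω] (ι κ : Type*) [Fintype ι]
    [Fintype κ] (p q : Measure Ω) : Measure ((ι → Ω) × (κ → Ω)) :=
  (Measure.pi fun _ : ι ↦ p).prod (Measure.pi fun _ : κ ↦ q)

lemma twoSampleLaw_real_expect_add_expect_ge_le {f : Ω → ℝ} {a b τ m : ℝ}
    (hf : Measurable f) (hfab : ∀ ω, f ω ∈ Set.Icc a b) (hτ : 0 ≤ τ)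
    (hι : m ≤ Fintype.card ι) (hκ : m ≤ Fintype.card κ) :
    (twoSampleLaw ι κ p q).real
        {z | ∫ ω, f ω ∂p + ∫ ω, f ω ∂q + 2 * τ ≤ 𝔼 i, f (z.1 i) + 𝔼 j, f (z.2 j)} ≤
      2 * exp (-(m * (2 * τ ^ 2 / (b - a) ^ 2))) := by
  calc (twoSampleLaw ι κ p q).real
        {z | ∫ ω, f ω ∂p + ∫ ω, f ω ∂q + 2 * τ ≤ 𝔼 i, f (z.1 i) + 𝔼 j, f (z.2 j)}
      ≤ (Measure.pi fun _ : ι ↦ p).real {x | ∫ ω, f ω ∂p + τ ≤ 𝔼 i, f (x i)} +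
          (Measure.pi fun _ : κ ↦ q).real {y | ∫ ω, f ω ∂q + τ ≤ 𝔼 j, f (y j)} := by
        rw [two_mul, add_add_add_comm]
        exact measureReal_prod_add_ge_le (fun x : ι → Ω ↦ 𝔼 i, f (x i))
          (fun y : κ → Ω ↦ 𝔼 j, f (y j)) _ _
    _ ≤ exp (-(Fintype.card ι * (2 * τ ^ 2 / (b - a) ^ 2))) +
          exp (-(Fintype.card κ * (2 * τ ^ 2 / (b - a) ^ 2))) := add_le_add
        (measureReal_pi_expect_ge_le_of_mem_Icc hf.aemeasurable (.of_forall hfab) hτ)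
        (measureReal_pi_expect_ge_le_of_mem_Icc hf.aemeasurable (.of_forall hfab) hτ)
    _ ≤ 2 * exp (-(m * (2 * τ ^ 2 / (b - a) ^ 2))) := by
        rw [two_mul (exp _)]
        gcongr

lemma twoSampleLaw_real_expect_sub_expect_le {f : Ω → ℝ} {M v lam m : ℝ} (hf : Measurable f)
    (hfM : ∀ ω, |f ω| ≤ M) (hfp : ∫ ω, f ω ^ 2 ∂p ≤ v) (hfq : ∫ ω, f ω ^ 2 ∂q ≤ v)
    (hv : 0 < v) (hm : 0 < m) (hlam : 0 ≤ lam) (hlamM : M ^ 2 * lam ^ 2 ≤ 9 * v * m)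
    (hι : m ≤ Fintype.card ι) (hκ : m ≤ Fintype.card κ) :
    (twoSampleLaw ι κ p q).real
        {z | 𝔼 i, f (z.1 i) - 𝔼 j, f (z.2 j) ≤
          ∫ ω, f ω ∂p - ∫ ω, f ω ∂q - 2 * (lam * √(v / m))} ≤
      2 * exp (-lam ^ 2 / 4) := by
  set τ := lam * √(v / m)
  have hτ : 0 ≤ τ := by positivity
  have hτ_sq : τ ^ 2 = lam ^ 2 * v / m := by
    rw [mul_pow, sq_sqrt (by positivity), mul_div_assoc]
  have hτM : M * τ ≤ 3 * v := by
    refine le_of_sq_le_sq ?_ (by positivity)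
    calc (M * τ) ^ 2 = M ^ 2 * lam ^ 2 * v / m := by rw [mul_pow, hτ_sq]; ring
      _ ≤ 9 * v * m * v / m := by gcongr
      _ = (3 * v) ^ 2 := by field_simp; ring
  have hexponent {N : ℕ} (hN : m ≤ N) : exp (-(N * (τ ^ 2 / (4 * v)))) ≤ exp (-lam ^ 2 / 4) := by
    calc exp (-(N * (τ ^ 2 / (4 * v)))) ≤ exp (-(m * (τ ^ 2 / (4 * v)))) := by gcongr
      _ = exp (-lam ^ 2 / 4) := by
        rw [hτ_sq]
        congr 1
        field_simp
  have hmem (ρ : Measure Ω) [IsProbabilityMeasure ρ] : MemLp f 2 ρ :=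
    .of_bound hf.aestronglyMeasurable M (.of_forall hfM)
  calc (twoSampleLaw ι κ p q).real
        {z | 𝔼 i, f (z.1 i) - 𝔼 j, f (z.2 j) ≤ ∫ ω, f ω ∂p - ∫ ω, f ω ∂q - 2 * τ}
      ≤ (Measure.pi fun _ : ι ↦ p).real {x | ∫ ω, (-f) ω ∂p + τ ≤ 𝔼 i, (-f) (x i)} +
          (Measure.pi fun _ : κ ↦ q).real {y | ∫ ω, f ω ∂q + τ ≤ 𝔼 j, f (y j)} := by
        refine (measureReal_mono fun z hz ↦ ?_).trans (measureReal_prod_add_ge_le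
          (fun x : ι → Ω ↦ 𝔼 i, (-f) (x i)) (fun y : κ → Ω ↦ 𝔼 j, f (y j)) _ _)
        simp only [Set.mem_ofPred_eq, Pi.neg_apply, integral_neg, Finset.expect_neg_distrib] at hz ⊢
        linarith
    _ ≤ exp (-lam ^ 2 / 4) + exp (-lam ^ 2 / 4) := add_le_add
        ((measureReal_pi_expect_ge_le_of_integral_sq_le (hmem p).neg
          (.of_forall fun ω ↦ (neg_le_abs _).trans (hfM ω)) (by simpa using hfp) hv hτ hτM).trans
          (hexponent hι))
        ((measureReal_pi_expect_ge_le_of_integral_sq_le (hmem q)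
          (.of_forall fun ω ↦ (le_abs_self _).trans (hfM ω)) hfq hv hτ hτM).trans (hexponent hκ))
    _ = 2 * exp (-lam ^ 2 / 4) := (two_mul _).symm

end TwoSample

section KernelMean

variable {X : Type*} [MeasurableSpace X] {K : X → X → ℝ} {C ν : ℝ} {μ ρ p q : Measure X}

/-- The mean embedding of `μ` with respect to the kernel `K`, evaluated at `z`. It is also used for
the squared kernel, where `kernelMean (K ^ 2) μ z = 𝔼_{x ∼ μ} K(z, x)²`. -/
noncomputable def kernelMean (K : X → X → ℝ) (μ : Measure X) (z : X) : ℝ :=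
  ∫ x, K z x ∂μ

lemma measurable_kernelMean [SFinite μ] (hK : Measurable (Function.uncurry K)) :
    Measurable (kernelMean K μ) :=
  hK.stronglyMeasurable.integral_prod_right.measurable

variable [IsProbabilityMeasure μ] [IsProbabilityMeasure ρ] [IsProbabilityMeasure p]
  [IsProbabilityMeasure q]

lemma abs_kernelMean_le (hKC : ∀ x y, |K x y| ≤ C) (z : X) : |kernelMean K μ z| ≤ C := by
  simpa [kernelMean] using norm_integral_le_of_norm_le_const (μ := μ) (f := K z)
    (.of_forall (hKC z))

lemma memLp_kernelMean (hK : Measurable (Function.uncurry K)) (hKC : ∀ x y, |K x y| ≤ C)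
    (r : ℝ≥0∞) : MemLp (kernelMean K μ) r ρ :=
  .of_bound (measurable_kernelMean hK).aestronglyMeasurable C
    (.of_forall (abs_kernelMean_le hKC))

lemma sq_kernelMean_le (hK : Measurable (Function.uncurry K)) (hKC : ∀ x y, |K x y| ≤ C) (z : X) :
    kernelMean K μ z ^ 2 ≤ kernelMean (K ^ 2) μ z :=
  sq_integral_le_integral_sq
    (.of_bound hK.of_uncurry_left.aestronglyMeasurable C (.of_forall (hKC z)))

lemma integral_kernelMean_comm (hK : Measurable (Function.uncurry K)) (hKC : ∀ x y, |K x y| ≤ C)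
    (hKsym : ∀ x y, K x y = K y x) :
    ∫ z, kernelMean K μ z ∂ρ = ∫ z, kernelMean K ρ z ∂μ := by
  refine (integral_integral_swap (.of_bound hK.aestronglyMeasurable C
    (.of_forall fun z ↦ hKC z.1 z.2))).trans ?_
  simp only [kernelMean, hKsym]

lemma integral_kernelMean_sq_comm (hK : Measurable (Function.uncurry K))
    (hKC : ∀ x y, |K x y| ≤ C) (hKsym : ∀ x y, K x y = K y x) :
    ∫ z, kernelMean (K ^ 2) p z ∂q = ∫ z, kernelMean (K ^ 2) q z ∂p :=
  integral_kernelMean_comm (hK.pow_const 2) (abs_sq_kernel_le hKC) fun x y ↦ by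
    simp only [Pi.pow_apply, hKsym x y]

/-- The (unnormalised) witness function of the MMD between `p` and `q`: the difference of their
mean embeddings. -/
noncomputable def popWitness (K : X → X → ℝ) (p q : Measure X) (z : X) : ℝ :=
  kernelMean K p z - kernelMean K q z

lemma measurable_popWitness (hK : Measurable (Function.uncurry K)) :
    Measurable (popWitness K p q) :=
  (measurable_kernelMean hK).sub (measurable_kernelMean hK)

lemma abs_popWitness_le (hKC : ∀ x y, |K x y| ≤ C) (z : X) : |popWitness K p q z| ≤ 2 * C :=
  calc |popWitness K p q z| ≤ |kernelMean K p z| + |kernelMean K q z| := abs_sub _ _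
    _ ≤ C + C := add_le_add (abs_kernelMean_le hKC z) (abs_kernelMean_le hKC z)
    _ = 2 * C := (two_mul C).symm

lemma memLp_popWitness (hK : Measurable (Function.uncurry K)) (hKC : ∀ x y, |K x y| ≤ C)
    (r : ℝ≥0∞) : MemLp (popWitness K p q) r ρ :=
  (memLp_kernelMean hK hKC r).sub (memLp_kernelMean hK hKC r)

lemma integral_popWitness_sub_integral_popWitness (hK : Measurable (Function.uncurry K))
    (hKC : ∀ x y, |K x y| ≤ C) (hKsym : ∀ x y, K x y = K y x) :
    ∫ z, popWitness K p q z ∂p - ∫ z, popWitness K p q z ∂q = deltaK K p q := by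
  have hint (μ ρ : Measure X) [IsProbabilityMeasure μ] [IsProbabilityMeasure ρ] :
      Integrable (kernelMean K μ) ρ := (memLp_kernelMean hK hKC 1).integrable le_rfl
  simp only [popWitness, integral_sub (hint _ _) (hint _ _)]
  rw [integral_kernelMean_comm (μ := p) (ρ := q) hK hKC hKsym]
  simp only [deltaK, kernelMean]
  ring

lemma integral_sq_popWitness_le (hK : Measurable (Function.uncurry K))
    (hKC : ∀ x y, |K x y| ≤ C) (hp : ∫ z, kernelMean (K ^ 2) p z ∂ρ ≤ ν)
    (hq : ∫ z, kernelMean (K ^ 2) q z ∂ρ ≤ ν) :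
    ∫ z, popWitness K p q z ^ 2 ∂ρ ≤ 4 * ν := by
  have hint (μ : Measure X) [IsProbabilityMeasure μ] : Integrable (kernelMean (K ^ 2) μ) ρ :=
    (memLp_kernelMean (hK.pow_const 2) (abs_sq_kernel_le hKC) 1).integrable le_rfl
  calc ∫ z, popWitness K p q z ^ 2 ∂ρ
      ≤ ∫ z, 2 * (kernelMean (K ^ 2) p z + kernelMean (K ^ 2) q z) ∂ρ :=
        integral_mono (memLp_popWitness hK hKC 2).integrable_sq
          (((hint p).add (hint q)).const_mul 2) fun z ↦
          sq_sub_le_two_mul_add (sq_kernelMean_le hK hKC z) (sq_kernelMean_le hK hKC z)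
    _ = 2 * (∫ z, kernelMean (K ^ 2) p z ∂ρ + ∫ z, kernelMean (K ^ 2) q z ∂ρ) := by
        rw [integral_const_mul, integral_add (hint p) (hint q)]
    _ ≤ 4 * ν := by linarith

lemma deltaK_sq_le (hK : Measurable (Function.uncurry K)) (hKC : ∀ x y, |K x y| ≤ C)
    (hKsym : ∀ x y, K x y = K y x) (hpp : ∫ z, kernelMean (K ^ 2) p z ∂p ≤ ν)
    (hpq : ∫ z, kernelMean (K ^ 2) q z ∂p ≤ ν) (hqp : ∫ z, kernelMean (K ^ 2) p z ∂q ≤ ν)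
    (hqq : ∫ z, kernelMean (K ^ 2) q z ∂q ≤ ν) : deltaK K p q ^ 2 ≤ 16 * ν :=
  calc deltaK K p q ^ 2
      = (∫ z, popWitness K p q z ∂p - ∫ z, popWitness K p q z ∂q) ^ 2 := by
        rw [integral_popWitness_sub_integral_popWitness hK hKC hKsym]
    _ ≤ 2 * (4 * ν + 4 * ν) := sq_sub_le_two_mul_add
        ((sq_integral_le_integral_sq (memLp_popWitness hK hKC 2)).trans
          (integral_sq_popWitness_le hK hKC hpp hpq))
        ((sq_integral_le_integral_sq (memLp_popWitness hK hKC 2)).trans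
          (integral_sq_popWitness_le hK hKC hqp hqq))
    _ = 16 * ν := by ring

lemma pos_of_deltaK_pos (hK : Measurable (Function.uncurry K)) (hKC : ∀ x y, |K x y| ≤ C)
    (hKsym : ∀ x y, K x y = K y x) (hpp : ∫ z, kernelMean (K ^ 2) p z ∂p ≤ ν)
    (hpq : ∫ z, kernelMean (K ^ 2) q z ∂p ≤ ν) (hqq : ∫ z, kernelMean (K ^ 2) q z ∂q ≤ ν)
    (hδ : 0 < deltaK K p q) : 0 < ν := by
  have hqp := (integral_kernelMean_sq_comm hK hKC hKsym).trans_le hpq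
  linarith [deltaK_sq_le hK hKC hKsym hpp hpq hqp hqq, pow_pos hδ 2]

end KernelMean

section EmpWitness

variable {X : Type*} {K : X → X → ℝ} {C : ℝ} {ι κ : Type*} [Fintype ι] [Fintype κ]

/-- The witness function of the empirical MMD between the two samples in `d`: the empirical
counterpart of `popWitness`. -/
noncomputable def empWitness (K : X → X → ℝ) (d : (ι → X) × (κ → X)) (z : X) : ℝ :=
  𝔼 i, K z (d.1 i) - 𝔼 j, K z (d.2 j)

lemma asymMMD_eq_expect_empWitness_sub {n1X n1Y n2X n2Y : ℕ}
    (dtr : (Fin n1X → X) × (Fin n1Y → X)) (dte : (Fin n2X → X) × (Fin n2Y → X)) :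
    asymMMD K n1X n1Y n2X n2Y dtr dte =
      𝔼 i, empWitness K dtr (dte.1 i) - 𝔼 i, empWitness K dtr (dte.2 i) := by
  simp only [asymMMD, empWitness, Finset.expect_sub_distrib, Fintype.expect_eq_sum_div_card,
    Fintype.card_fin, ← Finset.sum_div]
  ring

lemma abs_empWitness_le (hC : 0 ≤ C) (hKC : ∀ x y, |K x y| ≤ C) (d : (ι → X) × (κ → X)) (z : X) :
    |empWitness K d z| ≤ 2 * C :=
  calc |empWitness K d z| ≤ |𝔼 i, K z (d.1 i)| + |𝔼 j, K z (d.2 j)| := abs_sub _ _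
    _ ≤ C + C := add_le_add (abs_expect_le_of_forall_abs_le hC fun _ ↦ hKC _ _)
        (abs_expect_le_of_forall_abs_le hC fun _ ↦ hKC _ _)
    _ = 2 * C := (two_mul C).symm

variable [MeasurableSpace X] {p q ρ : Measure X} [IsProbabilityMeasure p] [IsProbabilityMeasure q]
  [IsProbabilityMeasure ρ]

lemma measurable_empWitness (hK : Measurable (Function.uncurry K)) (d : (ι → X) × (κ → X)) :
    Measurable (empWitness K d) :=
  (measurable_expect fun _ ↦ hK.of_uncurry_right).sub
    (measurable_expect fun _ ↦ hK.of_uncurry_right)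

lemma memLp_expect_kernel (hK : Measurable (Function.uncurry K)) (hC : 0 ≤ C)
    (hKC : ∀ x y, |K x y| ≤ C) (x : ι → X) (r : ℝ≥0∞) : MemLp (fun z ↦ 𝔼 i, K z (x i)) r ρ :=
  .of_bound (measurable_expect fun _ ↦ hK.of_uncurry_right).aestronglyMeasurable C
    (.of_forall fun _ ↦ abs_expect_le_of_forall_abs_le hC fun _ ↦ hKC _ _)

lemma integral_expect_kernel (hK : Measurable (Function.uncurry K))
    (hKC : ∀ x y, |K x y| ≤ C) (hKsym : ∀ x y, K x y = K y x) (x : ι → X) :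
    ∫ z, 𝔼 i, K z (x i) ∂ρ = 𝔼 i, kernelMean K ρ (x i) := by
  rw [integral_expect fun i ↦ .of_bound hK.of_uncurry_right.aestronglyMeasurable C
    (.of_forall fun z ↦ hKC z (x i))]
  simp only [kernelMean, hKsym _ (x _)]

lemma integral_empWitness (hK : Measurable (Function.uncurry K)) (hC : 0 ≤ C)
    (hKC : ∀ x y, |K x y| ≤ C) (hKsym : ∀ x y, K x y = K y x) (d : (ι → X) × (κ → X)) :
    ∫ z, empWitness K d z ∂ρ = 𝔼 i, kernelMean K ρ (d.1 i) - 𝔼 j, kernelMean K ρ (d.2 j) := by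
  simp only [empWitness]
  rw [integral_sub ((memLp_expect_kernel hK hC hKC _ 1).integrable le_rfl)
    ((memLp_expect_kernel hK hC hKC _ 1).integrable le_rfl),
    integral_expect_kernel hK hKC hKsym, integral_expect_kernel hK hKC hKsym]

lemma integral_empWitness_sub_integral_empWitness (hK : Measurable (Function.uncurry K))
    (hC : 0 ≤ C) (hKC : ∀ x y, |K x y| ≤ C) (hKsym : ∀ x y, K x y = K y x)
    (d : (ι → X) × (κ → X)) :
    ∫ z, empWitness K d z ∂p - ∫ z, empWitness K d z ∂q =
      𝔼 i, popWitness K p q (d.1 i) - 𝔼 j, popWitness K p q (d.2 j) := by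
  simp only [integral_empWitness hK hC hKC hKsym, popWitness, Finset.expect_sub_distrib]
  ring

lemma integral_sq_empWitness_le (hK : Measurable (Function.uncurry K)) (hC : 0 ≤ C)
    (hKC : ∀ x y, |K x y| ≤ C) (hKsym : ∀ x y, K x y = K y x) (d : (ι → X) × (κ → X)) :
    ∫ z, empWitness K d z ^ 2 ∂ρ ≤
      2 * (𝔼 i, kernelMean (K ^ 2) ρ (d.1 i) + 𝔼 j, kernelMean (K ^ 2) ρ (d.2 j)) := by
  have hK_sq : Measurable (Function.uncurry (K ^ 2)) := hK.pow_const 2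
  have hint_fst : Integrable (fun z ↦ 𝔼 i, (K ^ 2) z (d.1 i)) ρ :=
    (memLp_expect_kernel hK_sq (sq_nonneg C) (abs_sq_kernel_le hKC) d.1 1).integrable le_rfl
  have hint_snd : Integrable (fun z ↦ 𝔼 j, (K ^ 2) z (d.2 j)) ρ :=
    (memLp_expect_kernel hK_sq (sq_nonneg C) (abs_sq_kernel_le hKC) d.2 1).integrable le_rfl
  have hL2 : MemLp (empWitness K d) 2 ρ :=
    (memLp_expect_kernel hK hC hKC d.1 2).sub (memLp_expect_kernel hK hC hKC d.2 2)
  have hpointwise (z : X) : empWitness K d z ^ 2 ≤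
      2 * (𝔼 i, (K ^ 2) z (d.1 i) + 𝔼 j, (K ^ 2) z (d.2 j)) := by
    simp only [empWitness, Pi.pow_apply]
    exact sq_sub_le_two_mul_add (sq_expect_le_expect_sq _) (sq_expect_le_expect_sq _)
  calc ∫ z, empWitness K d z ^ 2 ∂ρ
      ≤ ∫ z, 2 * (𝔼 i, (K ^ 2) z (d.1 i) + 𝔼 j, (K ^ 2) z (d.2 j)) ∂ρ :=
        integral_mono hL2.integrable_sq ((hint_fst.add hint_snd).const_mul 2) hpointwise
    _ = 2 * (𝔼 i, kernelMean (K ^ 2) ρ (d.1 i) + 𝔼 j, kernelMean (K ^ 2) ρ (d.2 j)) := by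
        have hKsym_sq (x y : X) : (K ^ 2) x y = (K ^ 2) y x := by
          simp only [Pi.pow_apply, hKsym x y]
        rw [integral_const_mul, integral_add hint_fst hint_snd,
          integral_expect_kernel hK_sq (abs_sq_kernel_le hKC) hKsym_sq,
          integral_expect_kernel hK_sq (abs_sq_kernel_le hKC) hKsym_sq]

end EmpWitness

section Power

variable {X : Type*} [MeasurableSpace X] {K : X → X → ℝ} {p q : Measure X}
  [IsProbabilityMeasure p] [IsProbabilityMeasure q] {ι κ : Type*} [Fintype ι] [Fintype κ]
  {ν ε lam m : ℝ}

/-- The good training samples: for symmetric `K` the empirical witness function `w` of such a sample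
satisfies `∫ w ∂p - ∫ w ∂q > D`, and its second moments under `p` and `q` are at most `2 * b`. -/
def goodTrainingEvent (K : X → X → ℝ) (p q : Measure X) (D b : ℝ) : Set ((ι → X) × (κ → X)) :=
  {d | D < 𝔼 i, popWitness K p q (d.1 i) - 𝔼 j, popWitness K p q (d.2 j) ∧
    𝔼 i, kernelMean (K ^ 2) p (d.1 i) + 𝔼 j, kernelMean (K ^ 2) p (d.2 j) < b ∧
    𝔼 i, kernelMean (K ^ 2) q (d.1 i) + 𝔼 j, kernelMean (K ^ 2) q (d.2 j) < b}

lemma measurableSet_goodTrainingEvent (hK : Measurable (Function.uncurry K)) (D b : ℝ) :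
    MeasurableSet (goodTrainingEvent K p q D b : Set ((ι → X) × (κ → X))) := by
  have hfst {f : X → ℝ} (hf : Measurable f) :
      Measurable fun d : (ι → X) × (κ → X) ↦ 𝔼 i, f (d.1 i) :=
    measurable_expect fun i ↦ hf.comp ((measurable_pi_apply i).comp measurable_fst)
  have hsnd {f : X → ℝ} (hf : Measurable f) :
      Measurable fun d : (ι → X) × (κ → X) ↦ 𝔼 j, f (d.2 j) :=
    measurable_expect fun j ↦ hf.comp ((measurable_pi_apply j).comp measurable_snd)
  have hu : Measurable (popWitness K p q) := measurable_popWitness hK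
  have hVp : Measurable (kernelMean (K ^ 2) p) := measurable_kernelMean (hK.pow_const 2)
  have hVq : Measurable (kernelMean (K ^ 2) q) := measurable_kernelMean (hK.pow_const 2)
  exact (measurableSet_lt measurable_const ((hfst hu).sub (hsnd hu))).inter
    ((measurableSet_lt ((hfst hVp).add (hsnd hVp)) measurable_const).inter
      (measurableSet_lt ((hfst hVq).add (hsnd hVq)) measurable_const))

lemma twoSampleLaw_real_expect_popWitness_sub_le (hK : Measurable (Function.uncurry K))
    (hKbdd : ∀ x y, |K x y| ≤ 1) (hKsym : ∀ x y, K x y = K y x)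
    (hpp : ∫ z, kernelMean (K ^ 2) p z ∂p ≤ ν) (hpq : ∫ z, kernelMean (K ^ 2) q z ∂p ≤ ν)
    (hqp : ∫ z, kernelMean (K ^ 2) p z ∂q ≤ ν) (hqq : ∫ z, kernelMean (K ^ 2) q z ∂q ≤ ν)
    (hν : 0 < ν) (hm : 0 < m) (hlam : 0 ≤ lam) (hlamν : lam ^ 2 ≤ 9 * ν * m)
    (hι : m ≤ Fintype.card ι) (hκ : m ≤ Fintype.card κ) :
    (twoSampleLaw ι κ p q).real
        {d | 𝔼 i, popWitness K p q (d.1 i) - 𝔼 j, popWitness K p q (d.2 j) ≤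
          deltaK K p q - 4 * (lam * √(ν / m))} ≤ 2 * exp (-lam ^ 2 / 4) := by
  have hdev : 2 * (lam * √(4 * ν / m)) = 4 * (lam * √(ν / m)) := by
    rw [mul_div_assoc, sqrt_four_mul]
    ring
  rw [← hdev, ← integral_popWitness_sub_integral_popWitness hK hKbdd hKsym]
  exact twoSampleLaw_real_expect_sub_expect_le (measurable_popWitness hK)
    (abs_popWitness_le hKbdd) (integral_sq_popWitness_le hK hKbdd hpp hpq)
    (integral_sq_popWitness_le hK hKbdd hqp hqq) (by positivity) hm hlam (by linarith) hι hκ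

lemma twoSampleLaw_real_expect_kernelMean_sq_ge_le {ρ : Measure X} [IsProbabilityMeasure ρ]
    (hK : Measurable (Function.uncurry K)) (hKbdd : ∀ x y, |K x y| ≤ 1)
    (hp : ∫ z, kernelMean (K ^ 2) ρ z ∂p ≤ ν) (hq : ∫ z, kernelMean (K ^ 2) ρ z ∂q ≤ ν)
    (hεν : 0 ≤ ε * ν) (hlamε : lam ^ 2 ≤ 8 * m * (ε * ν) ^ 2)
    (hι : m ≤ Fintype.card ι) (hκ : m ≤ Fintype.card κ) :
    (twoSampleLaw ι κ p q).real
        {d | 2 * ((1 + ε) * ν) ≤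
          𝔼 i, kernelMean (K ^ 2) ρ (d.1 i) + 𝔼 j, kernelMean (K ^ 2) ρ (d.2 j)} ≤
      2 * exp (-lam ^ 2 / 4) := by
  have hV_mem (z : X) : kernelMean (K ^ 2) ρ z ∈ Set.Icc 0 1 :=
    ⟨integral_nonneg fun x ↦ sq_nonneg (K z x), by
      simpa using (le_abs_self _).trans (abs_kernelMean_le (μ := ρ) (abs_sq_kernel_le hKbdd) z)⟩
  calc (twoSampleLaw ι κ p q).real
        {d | 2 * ((1 + ε) * ν) ≤
          𝔼 i, kernelMean (K ^ 2) ρ (d.1 i) + 𝔼 j, kernelMean (K ^ 2) ρ (d.2 j)}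
      ≤ (twoSampleLaw ι κ p q).real
        {d | ∫ z, kernelMean (K ^ 2) ρ z ∂p + ∫ z, kernelMean (K ^ 2) ρ z ∂q + 2 * (ε * ν) ≤
          𝔼 i, kernelMean (K ^ 2) ρ (d.1 i) + 𝔼 j, kernelMean (K ^ 2) ρ (d.2 j)} :=
        measureReal_mono fun d hd ↦ by
          rw [Set.mem_ofPred_eq] at hd ⊢
          linarith
    _ ≤ 2 * exp (-(m * (2 * (ε * ν) ^ 2 / (1 - 0) ^ 2))) :=
        twoSampleLaw_real_expect_add_expect_ge_le (measurable_kernelMean (hK.pow_const 2)) hV_mem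
          hεν hι hκ
    _ ≤ 2 * exp (-lam ^ 2 / 4) := by
        gcongr
        linarith

lemma one_sub_le_twoSampleLaw_real_goodTrainingEvent (hK : Measurable (Function.uncurry K))
    (hKbdd : ∀ x y, |K x y| ≤ 1) (hKsym : ∀ x y, K x y = K y x)
    (hpp : ∫ z, kernelMean (K ^ 2) p z ∂p ≤ ν) (hpq : ∫ z, kernelMean (K ^ 2) q z ∂p ≤ ν)
    (hqp : ∫ z, kernelMean (K ^ 2) p z ∂q ≤ ν) (hqq : ∫ z, kernelMean (K ^ 2) q z ∂q ≤ ν)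
    (hν : 0 < ν) (hm : 0 < m) (hlam : 0 ≤ lam) (hlamν : lam ^ 2 ≤ 9 * ν * m) (hε : 0 ≤ ε)
    (hlamε : lam ^ 2 ≤ 8 * m * (ε * ν) ^ 2) (hι : m ≤ Fintype.card ι) (hκ : m ≤ Fintype.card κ) :
    1 - 6 * exp (-lam ^ 2 / 4) ≤ (twoSampleLaw ι κ p q).real
      (goodTrainingEvent K p q (deltaK K p q - 4 * (lam * √(ν / m))) (2 * ((1 + ε) * ν))) := by
  set E : Set ((ι → X) × (κ → X)) :=
    goodTrainingEvent K p q (deltaK K p q - 4 * (lam * √(ν / m))) (2 * ((1 + ε) * ν))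
  set A := {d : (ι → X) × (κ → X) | 𝔼 i, popWitness K p q (d.1 i) -
    𝔼 j, popWitness K p q (d.2 j) ≤ deltaK K p q - 4 * (lam * √(ν / m))}
  set B := fun ρ : Measure X ↦ {d : (ι → X) × (κ → X) | 2 * ((1 + ε) * ν) ≤
    𝔼 i, kernelMean (K ^ 2) ρ (d.1 i) + 𝔼 j, kernelMean (K ^ 2) ρ (d.2 j)}
  have hE_compl : Eᶜ = A ∪ B p ∪ B q := by
    ext d
    simp only [E, A, B, goodTrainingEvent, Set.mem_compl_iff, Set.mem_union, Set.mem_ofPred_eq,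
      not_and_or, not_lt, or_assoc]
  have hεν : 0 ≤ ε * ν := by positivity
  have hE_compl_le : (twoSampleLaw ι κ p q).real Eᶜ ≤ 2 * exp (-lam ^ 2 / 4) +
      2 * exp (-lam ^ 2 / 4) + 2 * exp (-lam ^ 2 / 4) := by
    rw [hE_compl]
    exact (measureReal_union_le _ _).trans <| add_le_add
      ((measureReal_union_le _ _).trans <| add_le_add
        (twoSampleLaw_real_expect_popWitness_sub_le hK hKbdd hKsym hpp hpq hqp hqq hν hm hlam
          hlamν hι hκ)
        (twoSampleLaw_real_expect_kernelMean_sq_ge_le hK hKbdd hpp hqp hεν hlamε hι hκ))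
      (twoSampleLaw_real_expect_kernelMean_sq_ge_le hK hKbdd hpq hqq hεν hlamε hι hκ)
  rw [probReal_compl_eq_one_sub (measurableSet_goodTrainingEvent hK _ _)] at hE_compl_le
  linarith

lemma twoSampleLaw_real_asymMMD_le_of_mem_goodTrainingEvent {n1X n1Y n2X n2Y : ℕ} {D b : ℝ}
    (hK : Measurable (Function.uncurry K)) (hKbdd : ∀ x y, |K x y| ≤ 1)
    (hKsym : ∀ x y, K x y = K y x) (hb : 0 < b) (hm : 0 < m) (hlam : 0 ≤ lam)
    (hlamb : lam ^ 2 ≤ 9 * b * m) (h2X : m ≤ n2X) (h2Y : m ≤ n2Y)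
    {dtr : (Fin n1X → X) × (Fin n1Y → X)} (hdtr : dtr ∈ goodTrainingEvent K p q D (2 * b)) :
    (twoSampleLaw (Fin n2X) (Fin n2Y) p q).real
        {dte | asymMMD K n1X n1Y n2X n2Y dtr dte ≤ D - 4 * (lam * √(b / m))} ≤
      2 * exp (-lam ^ 2 / 4) := by
  obtain ⟨hmean, hVp, hVq⟩ := hdtr
  rw [← integral_empWitness_sub_integral_empWitness hK zero_le_one hKbdd hKsym] at hmean
  have hdev : 2 * (lam * √(4 * b / m)) = 4 * (lam * √(b / m)) := by
    rw [mul_div_assoc, sqrt_four_mul]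
    ring
  calc (twoSampleLaw (Fin n2X) (Fin n2Y) p q).real
        {dte | asymMMD K n1X n1Y n2X n2Y dtr dte ≤ D - 4 * (lam * √(b / m))}
      ≤ (twoSampleLaw (Fin n2X) (Fin n2Y) p q).real
        {dte | 𝔼 i, empWitness K dtr (dte.1 i) - 𝔼 j, empWitness K dtr (dte.2 j) ≤
          ∫ z, empWitness K dtr z ∂p - ∫ z, empWitness K dtr z ∂q -
            2 * (lam * √(4 * b / m))} := by
        refine measureReal_mono fun dte hdte ↦ ?_
        rw [Set.mem_ofPred_eq, asymMMD_eq_expect_empWitness_sub] at hdte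
        rw [Set.mem_ofPred_eq, hdev]
        linarith
    _ ≤ 2 * exp (-lam ^ 2 / 4) := twoSampleLaw_real_expect_sub_expect_le
        (measurable_empWitness hK dtr) (abs_empWitness_le zero_le_one hKbdd dtr)
        ((integral_sq_empWitness_le hK zero_le_one hKbdd hKsym dtr).trans (by linarith))
        ((integral_sq_empWitness_le hK zero_le_one hKbdd hKsym dtr).trans (by linarith))
        (by positivity) hm hlam (by linarith) (by simpa using h2X) (by simpa using h2Y)

lemma exists_measurableSet_forall_twoSampleLaw_real_asymMMD_le {n1X n1Y n2X n2Y : ℕ}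
    {lam1 lam21 lam22 : ℝ} (hK : Measurable (Function.uncurry K)) (hKbdd : ∀ x y, |K x y| ≤ 1)
    (hKsym : ∀ x y, K x y = K y x) (hpp : ∫ z, kernelMean (K ^ 2) p z ∂p ≤ ν)
    (hpq : ∫ z, kernelMean (K ^ 2) q z ∂p ≤ ν) (hqq : ∫ z, kernelMean (K ^ 2) q z ∂q ≤ ν)
    (hδ : 0 < deltaK K p q) (hε : 0 ≤ ε) (hm : 0 < m) (h1X : m ≤ n1X) (h1Y : m ≤ n1Y)
    (h2X : m ≤ n2X) (h2Y : m ≤ n2Y) (hlam1 : 0 ≤ lam1) (hlam22 : 0 ≤ lam22)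
    (hlam1ν : lam1 ^ 2 ≤ 9 * ν * m) (hlam22ν : lam22 ^ 2 ≤ 9 * ν * m)
    (hlam1ε : lam1 ^ 2 ≤ 8 * m * (ε * ν) ^ 2)
    (hsep : 16 * ν / deltaK K p q ^ 2 * (2 * lam1 + √(1 + ε) * (lam21 + lam22)) ^ 2 ≤ m) :
    ∃ E : Set ((Fin n1X → X) × (Fin n1Y → X)), MeasurableSet E ∧
      1 - 6 * exp (-lam1 ^ 2 / 4) ≤ (twoSampleLaw (Fin n1X) (Fin n1Y) p q).real E ∧
      ∀ dtr ∈ E, (twoSampleLaw (Fin n2X) (Fin n2Y) p q).real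
        {dte | asymMMD K n1X n1Y n2X n2Y dtr dte ≤
          4 * (√(1 + ε) * lam21 + lam1) * √(ν / m)} ≤ 2 * exp (-lam22 ^ 2 / 4) := by
  have hqp : ∫ z, kernelMean (K ^ 2) p z ∂q ≤ ν :=
    (integral_kernelMean_sq_comm hK hKbdd hKsym).trans_le hpq
  have hν : 0 < ν := pos_of_deltaK_pos hK hKbdd hKsym hpp hpq hqq hδ
  have hν_le : ν ≤ (1 + ε) * ν := le_mul_of_one_le_left hν.le (by linarith)
  have hthreshold : 4 * (√(1 + ε) * lam21 + lam1) * √(ν / m) ≤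
      deltaK K p q - 4 * (lam1 * √(ν / m)) - 4 * (lam22 * √((1 + ε) * ν / m)) := by
    rw [mul_div_assoc, sqrt_mul (by linarith)]
    linarith [four_mul_sqrt_div_mul_le hδ hν.le hm hsep]
  refine ⟨_, measurableSet_goodTrainingEvent hK _ _,
    one_sub_le_twoSampleLaw_real_goodTrainingEvent hK hKbdd hKsym hpp hpq hqp hqq hν hm hlam1
      hlam1ν hε hlam1ε (by simpa using h1X) (by simpa using h1Y), fun dtr hdtr ↦ ?_⟩
  refine (measureReal_mono fun dte hdte ↦ le_trans hdte hthreshold).trans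
    (twoSampleLaw_real_asymMMD_le_of_mem_goodTrainingEvent hK hKbdd hKsym (by positivity) hm
      hlam22 (hlam22ν.trans (by gcongr)) h2X h2Y hdtr)

end Power

theorem asym_mmd_power_testonly_bootstrap_general {𝒳 : Type*} [MeasurableSpace 𝒳] {K : 𝒳 → 𝒳 → ℝ}
    (hKmeas : Measurable (Function.uncurry K)) (hKsym : ∀ x y, K x y = K y x)
    (hKbdd : ∀ x y, |K x y| ≤ 1) {p q : Measure 𝒳} [IsProbabilityMeasure p]
    [IsProbabilityMeasure q] {ν : ℝ} (hνpp : ∫ x, ∫ y, K x y ^ 2 ∂p ∂p ≤ ν)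
    (hνpq : ∫ x, ∫ y, K x y ^ 2 ∂q ∂p ≤ ν) (hνqq : ∫ x, ∫ y, K x y ^ 2 ∂q ∂q ≤ ν)
    {n1X n1Y n2X n2Y : ℕ} {n ca : ℝ} (hca : 0 < ca) (hbal1 : ca * n ≤ n1X)
    (hbal2 : ca * n ≤ n1Y) (hbal3 : ca * n ≤ n2X) (hbal4 : ca * n ≤ n2Y)
    (hδ : 0 < deltaK K p q) {γ : ℝ} (hγ : 0 < γ) {lam21 lam22 : ℝ} (hlam22 : 0 ≤ lam22)
    (hn1 : (√(4 * log (8 / γ)) / (0.1 * ν)) ^ 2 / (8 * ca) < n)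
    (hn2 : 1 / ca * max ((max √(4 * log (8 / γ)) (max lam21 lam22)) ^ 2 / (9 * ν))
      (16 * ν / deltaK K p q ^ 2 *
        (2 * √(4 * log (8 / γ)) + √1.1 * (lam21 + lam22)) ^ 2) < n) :
    ∃ E : Set ((Fin n1X → 𝒳) × (Fin n1Y → 𝒳)), MeasurableSet E ∧
      1 - ENNReal.ofReal γ ≤ twoSampleLaw (Fin n1X) (Fin n1Y) p q E ∧
      ∀ dtr ∈ E, twoSampleLaw (Fin n2X) (Fin n2Y) p q
          {dte | asymMMD K n1X n1Y n2X n2Y dtr dte ≤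
            4 * (√1.1 * lam21 + √(4 * log (8 / γ))) * √(ν / (ca * n))} ≤
        ENNReal.ofReal (4 * exp (-lam22 ^ 2 / 4)) := by
  set lam1 := √(4 * log (8 / γ))
  have hlam1 : 0 ≤ lam1 := sqrt_nonneg _
  have hm : 0 < ca * n := mul_pos hca (lt_of_le_of_lt (by positivity) hn1)
  have hν : 0 < ν := pos_of_deltaK_pos hKmeas hKbdd hKsym hνpp hνpq hνqq hδ
  rw [one_div, inv_mul_lt_iff₀ hca, max_lt_iff, div_lt_iff₀' (by positivity)] at hn2
  obtain ⟨hmax, hsep⟩ := hn2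
  have hsq_le {l : ℝ} (hl : 0 ≤ l) (hl_max : l ≤ max lam1 (max lam21 lam22)) :
      l ^ 2 ≤ 9 * ν * (ca * n) := (pow_le_pow_left₀ hl hl_max 2).trans hmax.le
  have hlam1ε : lam1 ^ 2 ≤ 8 * (ca * n) * (0.1 * ν) ^ 2 := by
    rw [div_lt_iff₀ (by positivity), div_pow, div_lt_iff₀ (by positivity)] at hn1
    linarith
  rw [show (1.1 : ℝ) = 1 + 0.1 by norm_num] at hsep ⊢
  obtain ⟨E, hE_meas, hE, hE_test⟩ := exists_measurableSet_forall_twoSampleLaw_real_asymMMD_le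
    hKmeas hKbdd hKsym hνpp hνpq hνqq hδ (by norm_num) hm hbal1 hbal2 hbal3 hbal4 hlam1 hlam22
    (hsq_le hlam1 (le_max_left _ _)) (hsq_le hlam22 (by simp)) hlam1ε hsep.le
  refine ⟨E, hE_meas, ?_, fun dtr hdtr ↦ ?_⟩
  · rw [← ofReal_measureReal, ← ENNReal.ofReal_one, ← ENNReal.ofReal_sub _ hγ.le]
    have hlam1γ := exp_neg_sq_sqrt_four_mul_log_div_four_le (x := 8 / γ) (by positivity)
    rw [inv_div] at hlam1γ
    exact ENNReal.ofReal_le_ofReal (by linarith)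
  · rw [← ofReal_measureReal]
    exact ENNReal.ofReal_le_ofReal ((hE_test dtr hdtr).trans (by gcongr; norm_num))

/-- Theorem 3.2, power part (test-only bootstrap): under `H₁ : p ≠ q` with `δ_K > 0`,
with `λ₍₂₎,₁ = √(4 log(4/α))`, `λ₍₁₎ = √(4 log(8/γ))` and threshold
`t_thres = 4(√1.1 λ₍₂₎,₁ + λ₍₁₎)√(ν/(c_a n))`, if `n > (λ₍₁₎/(0.1ν))²/(8c_a)` and
`n > (1/c_a)·max{max{λ₍₁₎, λ₍₂₎,₁, λ₍₂₎,₂}²/(9ν), (16ν/δ_K²)(2λ₍₁₎ + √1.1(λ₍₂₎,₁+λ₍₂₎,₂))²}`,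
then there is a good event `E` of training data with `P₍₁₎(E) ≥ 1 − γ`, under which
`P₍₂₎[T̂_a ≤ t_thres] ≤ 4 e^{−λ₍₂₎,₂²/4}`. -/
theorem asym_mmd_power_testonly_bootstrap
    {d : ℕ} (𝒳 : Set (EuclideanSpace ℝ (Fin d))) (h𝒳 : MeasurableSet 𝒳)
    (K : 𝒳 → 𝒳 → ℝ)
    (hKmeas : Measurable (Function.uncurry K))
    (hKsym : ∀ x y, K x y = K y x)
    (hKpsd : ∀ (m : ℕ) (z : Fin m → 𝒳) (a : Fin m → ℝ),
      0 ≤ ∑ i, ∑ j, a i * a j * K (z i) (z j))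
    (hKbdd : ∀ x y, |K x y| ≤ 1)
    (p q : Measure 𝒳) [IsProbabilityMeasure p] [IsProbabilityMeasure q]
    (ν : ℝ) (hν1 : ν ≤ 1)
    (hνpp : ∫ x, ∫ y, (K x y)^2 ∂p ∂p ≤ ν)
    (hνpq : ∫ x, ∫ y, (K x y)^2 ∂q ∂p ≤ ν)
    (hνqq : ∫ x, ∫ y, (K x y)^2 ∂q ∂q ≤ ν)
    (n1X n1Y n2X n2Y : ℕ) (ca : ℝ) (hca : 0 < ca) (hca1 : ca < 1)
    (hbal1 : ca * ((n1X + n1Y + n2X + n2Y : ℕ) : ℝ) ≤ (n1X : ℝ))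
    (hbal2 : ca * ((n1X + n1Y + n2X + n2Y : ℕ) : ℝ) ≤ (n1Y : ℝ))
    (hbal3 : ca * ((n1X + n1Y + n2X + n2Y : ℕ) : ℝ) ≤ (n2X : ℝ))
    (hbal4 : ca * ((n1X + n1Y + n2X + n2Y : ℕ) : ℝ) ≤ (n2Y : ℝ))
    (hH1 : p ≠ q) (hδ : 0 < deltaK K p q)
    (α γ : ℝ) (hα : 0 < α) (hα1 : α < 1) (hγ : 0 < γ) (hγ1 : γ < 1)
    (lam22 : ℝ) (hlam22 : 0 < lam22)
    (hn1 : ((n1X + n1Y + n2X + n2Y : ℕ) : ℝ) >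
      (Real.sqrt (4 * Real.log (8/γ)) / (0.1 * ν))^2 / (8 * ca))
    (hn2 : ((n1X + n1Y + n2X + n2Y : ℕ) : ℝ) > (1/ca) * max
      ((max (Real.sqrt (4 * Real.log (8/γ)))
          (max (Real.sqrt (4 * Real.log (4/α))) lam22))^2 / (9 * ν))
      ((16 * ν / (deltaK K p q)^2)
        * (2 * Real.sqrt (4 * Real.log (8/γ))
            + Real.sqrt 1.1 * (Real.sqrt (4 * Real.log (4/α)) + lam22))^2)) :
    ∃ E : Set ((Fin n1X → 𝒳) × (Fin n1Y → 𝒳)), MeasurableSet E ∧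
      1 - ENNReal.ofReal γ ≤
        ((Measure.pi fun _ : Fin n1X => p).prod (Measure.pi fun _ : Fin n1Y => q)) E ∧
      ∀ dtr ∈ E,
        ((Measure.pi fun _ : Fin n2X => p).prod (Measure.pi fun _ : Fin n2Y => q))
          {dte : (Fin n2X → 𝒳) × (Fin n2Y → 𝒳) |
            asymMMD K n1X n1Y n2X n2Y dtr dte ≤
              4 * (Real.sqrt 1.1 * Real.sqrt (4 * Real.log (4/α))
                    + Real.sqrt (4 * Real.log (8/γ)))
                * Real.sqrt (ν/(ca * ((n1X + n1Y + n2X + n2Y : ℕ) : ℝ)))}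
          ≤ ENNReal.ofReal (4 * Real.exp (-lam22^2 / 4)) :=
  asym_mmd_power_testonly_bootstrap_general hKmeas hKsym hKbdd hνpp hνpq hνqq hca
    hbal1 hbal2 hbal3 hbal4 hδ hγ hlam22.le hn1 hn2
end
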